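/- arXiv:2407.12719 — 3 statements merged into one kernel-verified Lean document; each statement's English description precedes it below -/
import Mathlib

section
/- For every real number L with 0 ≤ L ≤ 2/π, there exists an infinite binary word w such that the limit lim_{n→∞} (d_n(w)/n!)^{1/n} exists and equals L. -/
open Filter

/-- `dCount w n` is the number of permutations `π` of `{1,…,n}` (modeled as `Fin n`,
zero-based) such that for every `1 ≤ i ≤ n-1`, `π(i) > π(i+1)` iff the `i`-th letter of the
infinite binary word `w` (1-indexed, `w 0` is irrelevant) equals `1` (i.e. `true`). -/
noncomputable def dCount (w : ℕ → Bool) (n : ℕ) : ℕ :=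
  Nat.card {π : Equiv.Perm (Fin n) //
    ∀ i : ℕ, ∀ h : i + 1 < n,
      (π ⟨i + 1, h⟩ < π ⟨i, Nat.lt_of_succ_lt h⟩ ↔ w (i + 1) = true)}

/-- Insert the value `j` after the last entry of a permutation, shifting larger values up. -/
def snocPerm {n : ℕ} (j : Fin (n + 1)) (π : Equiv.Perm (Fin n)) : Equiv.Perm (Fin (n + 1)) :=
  (finSuccEquiv' (Fin.last n)).trans ((Equiv.optionCongr π).trans (finSuccEquiv' j).symm)

lemma snocPerm_last {n : ℕ} (j : Fin (n + 1)) (π : Equiv.Perm (Fin n)) :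
    snocPerm j π (Fin.last n) = j := by
  simp [snocPerm]

lemma snocPerm_castSucc {n : ℕ} (j : Fin (n + 1)) (π : Equiv.Perm (Fin n)) (i : Fin n) :
    snocPerm j π i.castSucc = j.succAbove (π i) := by
  have h : finSuccEquiv' (Fin.last n) i.castSucc = some i := by
    rw [← Fin.succAbove_last_apply, finSuccEquiv'_succAbove]
  simp [snocPerm, h]

lemma snocPerm_bijective (n : ℕ) :
    Function.Bijective (fun p : Fin (n + 1) × Equiv.Perm (Fin n) => snocPerm p.1 p.2) := by
  refine (Fintype.bijective_iff_injective_and_card _).2 ⟨?_, ?_⟩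
  · rintro ⟨j, π⟩ ⟨k, ρ⟩ h
    have hjk : j = k := by
      simpa [snocPerm_last] using Equiv.congr_fun h (Fin.last n)
    subst hjk
    refine Prod.ext rfl (Equiv.ext fun i => ?_)
    simpa [snocPerm_castSucc] using Equiv.congr_fun h i.castSucc
  · simp [Fintype.card_perm, Nat.factorial_succ]

/-- The permutation has descents exactly at the positions where `w` is `true`. -/
def HasDescentWord (w : ℕ → Bool) {n : ℕ} (π : Equiv.Perm (Fin n)) : Prop :=
  ∀ i : ℕ, ∀ h : i + 1 < n,
    (π ⟨i + 1, h⟩ < π ⟨i, Nat.lt_of_succ_lt h⟩ ↔ w (i + 1) = true)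

lemma hasDescentWord_snocPerm (w : ℕ → Bool) {n : ℕ} (j : Fin (n + 2))
    (π : Equiv.Perm (Fin (n + 1))) :
    HasDescentWord w (snocPerm j π) ↔
      HasDescentWord w π ∧ (j ≤ (π (Fin.last n)).castSucc ↔ w (n + 1) = true) := by
  have hlast : ∀ h h', (snocPerm j π ⟨n + 1, h⟩ < snocPerm j π ⟨n, h'⟩ ↔
      j ≤ (π (Fin.last n)).castSucc) := by
    intro h h'
    have h1 : (⟨n + 1, h⟩ : Fin (n + 2)) = Fin.last (n + 1) := rfl
    have h2 : (⟨n, h'⟩ : Fin (n + 2)) = (Fin.last n).castSucc := rfl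
    rw [h1, h2, snocPerm_last, snocPerm_castSucc, Fin.lt_succAbove_iff_le_castSucc]
  have hlow : ∀ i h h' h₁ h₁', (snocPerm j π ⟨i + 1, h⟩ < snocPerm j π ⟨i, h'⟩ ↔
      π ⟨i + 1, h₁⟩ < π ⟨i, h₁'⟩) := by
    intro i h h' h₁ h₁'
    have e1 : (⟨i + 1, h⟩ : Fin (n + 2)) = (⟨i + 1, h₁⟩ : Fin (n + 1)).castSucc := rfl
    have e2 : (⟨i, h'⟩ : Fin (n + 2)) = (⟨i, h₁'⟩ : Fin (n + 1)).castSucc := rfl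
    rw [e1, e2, snocPerm_castSucc, snocPerm_castSucc]
    exact (Fin.strictMono_succAbove j).lt_iff_lt
  constructor
  · intro H
    refine ⟨fun i h => ?_, ?_⟩
    · rw [← H i (by omega)]
      exact (hlow i _ _ _ _).symm
    · rw [← H n (by omega)]
      exact (hlast _ _).symm
  · rintro ⟨H, H'⟩ i h
    rcases Nat.lt_or_ge (i + 1) (n + 1) with hi | hi
    · rw [← H i hi]
      exact hlow i _ _ _ _
    · obtain rfl : i = n := by omega
      rw [← H']
      exact hlast _ _

/-- One step of the recursion for permutations with a given descent word, refined by their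
last value. -/
def nextRow (n : ℕ) (a : Bool) (r : ℕ → ℕ) (j : ℕ) : ℕ :=
  if a then ∑ i ∈ Finset.range (n + 1) with j ≤ i, r i
  else ∑ i ∈ Finset.range (n + 1) with i < j, r i

/-- The number of permutations of `Fin (n + 1)` with descent word `w` and last value `j`. -/
def endCount (w : ℕ → Bool) : ℕ → ℕ → ℕ
  | 0, j => if j = 0 then 1 else 0
  | n + 1, j => nextRow n (w (n + 1)) (endCount w n) j

open Classical in
lemma card_filter_hasDescentWord (w : ℕ → Bool) (n : ℕ) (j : Fin (n + 1)) :
    (Finset.univ.filter fun π : Equiv.Perm (Fin (n + 1)) =>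
      HasDescentWord w π ∧ π (Fin.last n) = j).card = endCount w n j := by
  induction n with
  | zero =>
    have : j = 0 := Fin.ext (by omega)
    subst this
    rw [Finset.filter_true_of_mem]
    · simp [endCount]
    · intro π _
      exact ⟨fun i h => absurd h (by omega), Fin.ext (by omega)⟩
  | succ n ih =>
    have h1 : (Finset.univ.filter fun σ : Equiv.Perm (Fin (n + 2)) =>
        HasDescentWord w σ ∧ σ (Fin.last (n + 1)) = j).card =
        (Finset.univ.filter fun π : Equiv.Perm (Fin (n + 1)) =>
          HasDescentWord w π ∧ (j ≤ (π (Fin.last n)).castSucc ↔ w (n + 1) = true)).card := by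
      symm
      refine Finset.card_bij (fun π _ => snocPerm j π) ?_ ?_ ?_
      · intro π hπ
        simp only [Finset.mem_filter, Finset.mem_univ, true_and] at hπ ⊢
        exact ⟨(hasDescentWord_snocPerm w j π).2 hπ, snocPerm_last j π⟩
      · intro π _ ρ _ h
        exact (Prod.ext_iff.1 ((snocPerm_bijective (n + 1)).1 (a₁ := (j, π)) (a₂ := (j, ρ)) h)).2
      · intro σ hσ
        simp only [Finset.mem_filter, Finset.mem_univ, true_and] at hσ
        obtain ⟨⟨k, π⟩, rfl⟩ := (snocPerm_bijective (n + 1)).2 σ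
        simp only [snocPerm_last] at hσ
        obtain ⟨hσ, rfl⟩ := hσ
        exact ⟨π, by simpa using (hasDescentWord_snocPerm w k π).1 hσ, rfl⟩
    rw [h1, Finset.card_eq_sum_card_fiberwise (t := Finset.univ)
      (f := fun π => π (Fin.last n)) (fun _ _ => Finset.mem_coe.2 (Finset.mem_univ _))]
    have h2 : ∀ i : Fin (n + 1), ((Finset.univ.filter fun π : Equiv.Perm (Fin (n + 1)) =>
          HasDescentWord w π ∧ (j ≤ (π (Fin.last n)).castSucc ↔ w (n + 1) = true)).filter
            fun π => π (Fin.last n) = i).card =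
        if ((j : ℕ) ≤ i ↔ w (n + 1) = true) then endCount w n i else 0 := by
      intro i
      rw [Finset.filter_filter]
      split_ifs with hi
      · rw [← ih i]
        congr 1
        ext π
        simp only [Finset.mem_filter, Finset.mem_univ, true_and]
        constructor
        · rintro ⟨⟨h, -⟩, h'⟩
          exact ⟨h, h'⟩
        · rintro ⟨h, rfl⟩
          exact ⟨⟨h, hi⟩, rfl⟩
      · rw [Finset.card_eq_zero, Finset.filter_eq_empty_iff]
        rintro π - ⟨⟨-, h⟩, rfl⟩
        exact hi h
    rw [Finset.sum_congr rfl fun i _ => h2 i,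
      Fin.sum_univ_eq_sum_range
        (fun i => if ((j : ℕ) ≤ i ↔ w (n + 1) = true) then endCount w n i else 0) (n + 1)]
    rw [endCount, nextRow]
    cases w (n + 1) <;> simp [Finset.sum_filter]

lemma dCount_succ (w : ℕ → Bool) (n : ℕ) :
    dCount w (n + 1) = ∑ j ∈ Finset.range (n + 1), endCount w n j := by
  classical
  have h : dCount w (n + 1) = (Finset.univ.filter fun π : Equiv.Perm (Fin (n + 1)) =>
      HasDescentWord w π).card := by
    rw [dCount, Nat.card_eq_fintype_card, Fintype.card_subtype]
    rfl
  rw [h, Finset.card_eq_sum_card_fiberwise (t := Finset.univ)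
    (f := fun π => π (Fin.last n)) (fun _ _ => Finset.mem_coe.2 (Finset.mem_univ _)),
    ← Fin.sum_univ_eq_sum_range]
  refine Finset.sum_congr rfl fun j _ => ?_
  rw [Finset.filter_filter, card_filter_hasDescentWord]

open Polynomial in
lemma derivative_sum_bernsteinPolynomial (n i : ℕ) :
    derivative (∑ j ∈ Finset.range (i + 1), bernsteinPolynomial ℝ (n + 1) j) =
      -((n + 1 : ℝ[X]) * bernsteinPolynomial ℝ n i) := by
  induction i with
  | zero =>
    simp [bernsteinPolynomial.derivative_zero]
    ring
  | succ i ih =>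
    rw [Finset.sum_range_succ, derivative_add, ih, bernsteinPolynomial.derivative_succ]
    simp only [Nat.add_sub_cancel]
    push_cast
    ring

lemma eval_zero_sum_bernsteinPolynomial (n i : ℕ) :
    (∑ j ∈ Finset.range (i + 1), bernsteinPolynomial ℝ n j).eval 0 = 1 := by
  simp [Polynomial.eval_finsetSum, bernsteinPolynomial.eval_at_0]

lemma eval_one_sum_bernsteinPolynomial {n i : ℕ} (h : i < n) :
    (∑ j ∈ Finset.range (i + 1), bernsteinPolynomial ℝ n j).eval 1 = 0 := by
  rw [Polynomial.eval_finsetSum]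
  refine Finset.sum_eq_zero fun j hj => ?_
  rw [bernsteinPolynomial.eval_at_1, if_neg]
  have := Finset.mem_range.1 hj
  omega

/-- The density of the last value among `n + 1` uniform samples restricted to the event that
their descent word is `w`. -/
noncomputable def endDensity (w : ℕ → Bool) (n : ℕ) : Polynomial ℝ :=
  ∑ j ∈ Finset.range (n + 1),
    Polynomial.C ((endCount w n j : ℝ) / n.factorial) * bernsteinPolynomial ℝ n j

lemma endDensity_zero (w : ℕ → Bool) : endDensity w 0 = 1 := by
  simp [endDensity, endCount, bernsteinPolynomial]

lemma eval_endDensity_nonneg (w : ℕ → Bool) (n : ℕ) {x : ℝ} (h0 : 0 ≤ x) (h1 : x ≤ 1) :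
    0 ≤ (endDensity w n).eval x := by
  rw [endDensity, Polynomial.eval_finsetSum]
  refine Finset.sum_nonneg fun j _ => ?_
  have : 0 ≤ 1 - x := by linarith
  simp only [bernsteinPolynomial, Polynomial.eval_mul, Polynomial.eval_C, Polynomial.eval_pow,
    Polynomial.eval_X, Polynomial.eval_sub, Polynomial.eval_one, Polynomial.eval_natCast]
  positivity

lemma endDensity_succ_of_true {w : ℕ → Bool} {n : ℕ} (h : w (n + 1) = true) :
    endDensity w (n + 1) = ∑ i ∈ Finset.range (n + 1),
      Polynomial.C ((endCount w n i : ℝ) / (n + 1).factorial) *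
        ∑ j ∈ Finset.range (i + 1), bernsteinPolynomial ℝ (n + 1) j := by
  have h1 : ∀ i ∈ Finset.range (n + 1), ∑ j ∈ Finset.range (i + 1),
      bernsteinPolynomial ℝ (n + 1) j = ∑ j ∈ Finset.range (n + 2),
        if j ≤ i then bernsteinPolynomial ℝ (n + 1) j else 0 := by
    intro i hi
    rw [← Finset.sum_filter]
    refine Finset.sum_congr ?_ fun _ _ => rfl
    ext j
    simp only [Finset.mem_range, Finset.mem_filter] at hi ⊢
    omega
  rw [Finset.sum_congr rfl fun i hi => by rw [h1 i hi]]
  simp only [Finset.mul_sum]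
  rw [Finset.sum_comm, endDensity]
  refine Finset.sum_congr rfl fun j _ => ?_
  simp only [endCount, nextRow, h, if_true, Finset.sum_filter]
  push_cast
  rw [Finset.sum_div, map_sum, Finset.sum_mul]
  refine Finset.sum_congr rfl fun i _ => ?_
  split_ifs <;> simp

lemma endDensity_succ_of_false {w : ℕ → Bool} {n : ℕ} (h : w (n + 1) = false) :
    endDensity w (n + 1) = ∑ i ∈ Finset.range (n + 1),
      Polynomial.C ((endCount w n i : ℝ) / (n + 1).factorial) *
        (1 - ∑ j ∈ Finset.range (i + 1), bernsteinPolynomial ℝ (n + 1) j) := by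
  have h1 : ∀ i ∈ Finset.range (n + 1), 1 - ∑ j ∈ Finset.range (i + 1),
      bernsteinPolynomial ℝ (n + 1) j = ∑ j ∈ Finset.range (n + 2),
        if i < j then bernsteinPolynomial ℝ (n + 1) j else 0 := by
    intro i hi
    rw [← bernsteinPolynomial.sum ℝ (n + 1), sub_eq_iff_eq_add, ← Finset.sum_filter,
      ← Finset.sum_filter_add_sum_filter_not (Finset.range (n + 1 + 1)) (fun j => i < j)]
    congr 1
    refine Finset.sum_congr ?_ fun _ _ => rfl
    ext j
    simp only [Finset.mem_range, Finset.mem_filter] at hi ⊢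
    omega
  rw [Finset.sum_congr rfl fun i hi => by rw [h1 i hi]]
  simp only [Finset.mul_sum]
  rw [Finset.sum_comm, endDensity]
  refine Finset.sum_congr rfl fun j _ => ?_
  simp only [endCount, nextRow, h, Finset.sum_filter, Bool.false_eq_true, if_false]
  push_cast
  rw [Finset.sum_div, map_sum, Finset.sum_mul]
  refine Finset.sum_congr rfl fun i _ => ?_
  split_ifs <;> simp

open Polynomial in
lemma C_div_factorial_mul (a : ℝ) (n : ℕ) (p : ℝ[X]) :
    C (a / (n + 1).factorial) * ((n + 1 : ℝ[X]) * p) = C (a / n.factorial) * p := by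
  have h : (n + 1 : ℝ[X]) = C (n + 1 : ℝ) := by simp
  rw [h, ← mul_assoc, ← C_mul, Nat.factorial_succ]
  congr 2
  push_cast
  have := Nat.factorial_ne_zero n
  field_simp

lemma derivative_endDensity_of_true {w : ℕ → Bool} {n : ℕ} (h : w (n + 1) = true) :
    (endDensity w (n + 1)).derivative = -endDensity w n := by
  rw [endDensity_succ_of_true h, Polynomial.derivative_sum, endDensity, ← Finset.sum_neg_distrib]
  refine Finset.sum_congr rfl fun i _ => ?_
  rw [Polynomial.derivative_C_mul, derivative_sum_bernsteinPolynomial, mul_neg,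
    C_div_factorial_mul]

lemma derivative_endDensity_of_false {w : ℕ → Bool} {n : ℕ} (h : w (n + 1) = false) :
    (endDensity w (n + 1)).derivative = endDensity w n := by
  rw [endDensity_succ_of_false h, Polynomial.derivative_sum, endDensity]
  refine Finset.sum_congr rfl fun i _ => ?_
  rw [Polynomial.derivative_C_mul, Polynomial.derivative_sub, derivative_sum_bernsteinPolynomial,
    Polynomial.derivative_one, zero_sub, neg_neg, C_div_factorial_mul]

/-- The probability that `n + 1` uniform samples have descent word `w`. -/
noncomputable def wordProb (w : ℕ → Bool) (n : ℕ) : ℝ :=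
  (∑ j ∈ Finset.range (n + 1), endCount w n j : ℕ) / ((n + 1).factorial : ℝ)

lemma dCount_div_factorial (w : ℕ → Bool) (n : ℕ) :
    (dCount w (n + 1) : ℝ) / ((n + 1).factorial : ℝ) = wordProb w n := by
  rw [dCount_succ, wordProb]

lemma eval_zero_endDensity_of_false {w : ℕ → Bool} {n : ℕ} (h : w (n + 1) = false) :
    (endDensity w (n + 1)).eval 0 = 0 := by
  rw [endDensity_succ_of_false h, Polynomial.eval_finsetSum]
  refine Finset.sum_eq_zero fun i _ => ?_
  rw [Polynomial.eval_mul, Polynomial.eval_sub, eval_zero_sum_bernsteinPolynomial]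
  simp

lemma eval_one_endDensity_of_true {w : ℕ → Bool} {n : ℕ} (h : w (n + 1) = true) :
    (endDensity w (n + 1)).eval 1 = 0 := by
  rw [endDensity_succ_of_true h, Polynomial.eval_finsetSum]
  refine Finset.sum_eq_zero fun i hi => ?_
  rw [Polynomial.eval_mul, eval_one_sum_bernsteinPolynomial (Finset.mem_range.1 hi), mul_zero]

lemma eval_one_endDensity_of_false {w : ℕ → Bool} {n : ℕ} (h : w (n + 1) = false) :
    (endDensity w (n + 1)).eval 1 = wordProb w n := by
  rw [endDensity_succ_of_false h, Polynomial.eval_finsetSum, wordProb]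
  push_cast
  rw [Finset.sum_div]
  refine Finset.sum_congr rfl fun i hi => ?_
  rw [Polynomial.eval_mul, Polynomial.eval_sub,
    eval_one_sum_bernsteinPolynomial (Finset.mem_range.1 hi)]
  simp

lemma eval_zero_endDensity_of_true {w : ℕ → Bool} {n : ℕ} (h : w (n + 1) = true) :
    (endDensity w (n + 1)).eval 0 = wordProb w n := by
  rw [endDensity_succ_of_true h, Polynomial.eval_finsetSum, wordProb]
  push_cast
  rw [Finset.sum_div]
  refine Finset.sum_congr rfl fun i hi => ?_
  rw [Polynomial.eval_mul, eval_zero_sum_bernsteinPolynomial]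
  simp

lemma intervalIntegrable_eval (p : Polynomial ℝ) (a b : ℝ) :
    IntervalIntegrable (fun x => p.eval x) MeasureTheory.volume a b :=
  p.continuous.intervalIntegrable a b

lemma integral_eval_derivative (p : Polynomial ℝ) (a b : ℝ) :
    ∫ x in a..b, p.derivative.eval x = p.eval b - p.eval a :=
  intervalIntegral.integral_eq_sub_of_hasDerivAt (fun x _ => p.hasDerivAt x)
    (intervalIntegrable_eval _ _ _)

lemma integral_endDensity (w : ℕ → Bool) (n : ℕ) :
    ∫ x in (0 : ℝ)..1, (endDensity w n).eval x = wordProb w n := by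
  cases h : w (n + 1) with
  | false =>
    rw [← derivative_endDensity_of_false h, integral_eval_derivative,
      eval_one_endDensity_of_false h, eval_zero_endDensity_of_false h, sub_zero]
  | true =>
    rw [← neg_neg (endDensity w n), ← derivative_endDensity_of_true h]
    simp only [Polynomial.eval_neg]
    rw [intervalIntegral.integral_neg, integral_eval_derivative,
      eval_one_endDensity_of_true h, eval_zero_endDensity_of_true h]
    ring

lemma endCount_succ_le (w : ℕ → Bool) (n j : ℕ) :
    endCount w (n + 1) j ≤ ∑ i ∈ Finset.range (n + 1), endCount w n i := by
  rw [endCount, nextRow]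
  split_ifs <;> exact Finset.sum_le_sum_of_subset (Finset.filter_subset _ _)

lemma wordProb_zero (w : ℕ → Bool) : wordProb w 0 = 1 := by
  simp [wordProb, endCount]

lemma wordProb_nonneg (w : ℕ → Bool) (n : ℕ) : 0 ≤ wordProb w n := by
  unfold wordProb
  positivity

lemma wordProb_succ_le (w : ℕ → Bool) (n : ℕ) : wordProb w (n + 1) ≤ wordProb w n := by
  have h : ∑ j ∈ Finset.range (n + 2), endCount w (n + 1) j ≤
      (n + 2) * ∑ i ∈ Finset.range (n + 1), endCount w n i := by
    simpa using Finset.sum_le_card_nsmul (Finset.range (n + 2)) _ _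
      fun j _ => endCount_succ_le w n j
  unfold wordProb
  rw [Nat.factorial_succ (n + 1), div_le_div_iff₀ (by positivity) (by positivity)]
  norm_cast
  calc _ ≤ ((n + 2) * ∑ i ∈ Finset.range (n + 1), endCount w n i) * (n + 1).factorial :=
        Nat.mul_le_mul_right _ h
    _ = _ := by ring

lemma div_le_wordProb_succ (w : ℕ → Bool) (n : ℕ) :
    wordProb w n / (n + 2) ≤ wordProb w (n + 1) := by
  have h : ∑ i ∈ Finset.range (n + 1), endCount w n i ≤
      ∑ j ∈ Finset.range (n + 2), endCount w (n + 1) j := by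
    cases hw : w (n + 1) with
    | false =>
      refine le_trans (le_of_eq ?_) (Finset.single_le_sum (fun _ _ => Nat.zero_le _)
        (Finset.mem_range.2 (Nat.lt_succ_self (n + 1))))
      rw [endCount, nextRow, hw, if_neg (by simp), Finset.filter_true_of_mem]
      exact fun i hi => Finset.mem_range.1 hi
    | true =>
      refine le_trans (le_of_eq ?_) (Finset.single_le_sum (fun _ _ => Nat.zero_le _)
        (Finset.mem_range.2 (Nat.succ_pos (n + 1))))
      rw [endCount, nextRow, hw, if_pos rfl, Finset.filter_true_of_mem]
      exact fun i _ => Nat.zero_le i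
  unfold wordProb
  rw [Nat.factorial_succ (n + 1), div_div, div_le_div_iff₀ (by positivity) (by positivity)]
  norm_cast
  calc _ ≤ (∑ j ∈ Finset.range (n + 2), endCount w (n + 1) j) *
        ((n + 1 + 1) * (n + 1).factorial) := Nat.mul_le_mul_right _ h
    _ = _ := by ring

lemma eval_endDensity_eq_integral {w : ℕ → Bool} {n : ℕ} (h : w (n + 1) = false) (x : ℝ) :
    (endDensity w (n + 1)).eval x = ∫ y in (0 : ℝ)..x, (endDensity w n).eval y := by
  rw [← derivative_endDensity_of_false h, integral_eval_derivative,
    eval_zero_endDensity_of_false h, sub_zero]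

lemma eval_endDensity_le_of_run {w : ℕ → Bool} {m : ℕ} (k : ℕ)
    (hw : ∀ i, m ≤ i → i ≤ m + k → w (i + 1) = false) {x : ℝ} (h0 : 0 ≤ x) (h1 : x ≤ 1) :
    (endDensity w (m + k + 1)).eval x ≤ wordProb w m * (x ^ k / k.factorial) := by
  induction k generalizing x with
  | zero =>
    rw [eval_endDensity_eq_integral (hw _ (by omega) (by omega))]
    simp only [pow_zero, Nat.factorial_zero, Nat.cast_one, div_one, mul_one]
    rw [← integral_endDensity]
    refine intervalIntegral.integral_mono_interval le_rfl h0 h1 ?_ (intervalIntegrable_eval _ _ _)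
    refine (MeasureTheory.ae_restrict_iff' measurableSet_Ioc).2 (Filter.Eventually.of_forall ?_)
    exact fun y hy => eval_endDensity_nonneg w m hy.1.le hy.2
  | succ k ih =>
    rw [← add_assoc, eval_endDensity_eq_integral (hw _ (by omega) (by omega))]
    calc _ ≤ ∫ y in (0 : ℝ)..x, wordProb w m * (y ^ k / k.factorial) := by
          refine intervalIntegral.integral_mono_on h0 (intervalIntegrable_eval _ _ _)
            ((by fun_prop : Continuous _).intervalIntegrable _ _) fun y hy => ?_
          exact ih (fun i h h' => hw i h (by omega)) hy.1 (hy.2.trans h1)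
      _ = _ := by
          rw [intervalIntegral.integral_const_mul, intervalIntegral.integral_div, integral_pow,
            Nat.factorial_succ]
          push_cast
          field_simp
          ring

lemma wordProb_le_of_run {w : ℕ → Bool} {m : ℕ} (k : ℕ)
    (hw : ∀ i, m ≤ i → i < m + k → w (i + 1) = false) :
    wordProb w (m + k) ≤ wordProb w m / k.factorial := by
  cases k with
  | zero => simp
  | succ k =>
    rw [← integral_endDensity w (m + (k + 1)), ← add_assoc]
    calc _ ≤ ∫ y in (0 : ℝ)..1, wordProb w m * (y ^ k / k.factorial) := by
          refine intervalIntegral.integral_mono_on zero_le_one (intervalIntegrable_eval _ _ _)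
            ((by fun_prop : Continuous _).intervalIntegrable _ _) fun y hy => ?_
          exact eval_endDensity_le_of_run k (fun i h h' => hw i h (by omega)) hy.1 hy.2
      _ = _ := by
          rw [intervalIntegral.integral_const_mul, intervalIntegral.integral_div, integral_pow,
            Nat.factorial_succ]
          push_cast
          field_simp
          simp

lemma hasDerivAt_sin_pi_div_two_mul (x : ℝ) :
    HasDerivAt (fun x => 2 / Real.pi * Real.sin (Real.pi / 2 * x))
      (Real.cos (Real.pi / 2 * x)) x := by
  have h := (((hasDerivAt_id x).const_mul (Real.pi / 2)).sin).const_mul (2 / Real.pi)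
  refine h.congr_deriv ?_
  have := Real.pi_ne_zero
  simp only [id]
  field_simp

lemma hasDerivAt_neg_cos_pi_div_two_mul (x : ℝ) :
    HasDerivAt (fun x => -(2 / Real.pi) * Real.cos (Real.pi / 2 * x))
      (Real.sin (Real.pi / 2 * x)) x := by
  have h := (((hasDerivAt_id x).const_mul (Real.pi / 2)).cos).const_mul (-(2 / Real.pi))
  refine h.congr_deriv ?_
  have := Real.pi_ne_zero
  simp only [id]
  field_simp

lemma integral_endDensity_mul_sin {w : ℕ → Bool} {n : ℕ} (h : w (n + 1) = false) :
    ∫ x in (0 : ℝ)..1, (endDensity w (n + 1)).eval x * Real.sin (Real.pi / 2 * x) =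
      2 / Real.pi * ∫ x in (0 : ℝ)..1, (endDensity w n).eval x * Real.cos (Real.pi / 2 * x) := by
  rw [intervalIntegral.integral_mul_deriv_eq_deriv_mul
    (fun x _ => (endDensity w (n + 1)).hasDerivAt x)
    (fun x _ => hasDerivAt_neg_cos_pi_div_two_mul x) (intervalIntegrable_eval _ _ _)
    ((by fun_prop : Continuous _).intervalIntegrable _ _), eval_zero_endDensity_of_false h,
    derivative_endDensity_of_false h, mul_one, Real.cos_pi_div_two,
    ← intervalIntegral.integral_const_mul, mul_zero, mul_zero, zero_mul, sub_zero, zero_sub,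
    ← intervalIntegral.integral_neg]
  refine intervalIntegral.integral_congr fun x _ => ?_
  ring

lemma integral_endDensity_mul_cos {w : ℕ → Bool} {n : ℕ} (h : w (n + 1) = true) :
    ∫ x in (0 : ℝ)..1, (endDensity w (n + 1)).eval x * Real.cos (Real.pi / 2 * x) =
      2 / Real.pi * ∫ x in (0 : ℝ)..1, (endDensity w n).eval x * Real.sin (Real.pi / 2 * x) := by
  rw [intervalIntegral.integral_mul_deriv_eq_deriv_mul
    (fun x _ => (endDensity w (n + 1)).hasDerivAt x)
    (fun x _ => hasDerivAt_sin_pi_div_two_mul x) (intervalIntegrable_eval _ _ _)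
    ((by fun_prop : Continuous _).intervalIntegrable _ _), eval_one_endDensity_of_true h,
    derivative_endDensity_of_true h, mul_zero, Real.sin_zero,
    ← intervalIntegral.integral_const_mul, mul_zero, mul_zero, zero_mul, sub_zero, zero_sub,
    ← intervalIntegral.integral_neg]
  refine intervalIntegral.integral_congr fun x _ => ?_
  simp only [Polynomial.eval_neg]
  ring

lemma eval_endDensity_mono {w : ℕ → Bool} {n : ℕ} (h : w (n + 1) = false) {x y : ℝ}
    (h0 : 0 ≤ x) (hxy : x ≤ y) (h1 : y ≤ 1) :
    (endDensity w (n + 1)).eval x ≤ (endDensity w (n + 1)).eval y := by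
  rw [← sub_nonneg, ← integral_eval_derivative, derivative_endDensity_of_false h]
  exact intervalIntegral.integral_nonneg hxy fun t ht =>
    eval_endDensity_nonneg w n (h0.trans ht.1) (ht.2.trans h1)

lemma le_sin_pi_div_two_mul {x : ℝ} (h0 : 0 ≤ x) (h1 : x ≤ 1) :
    x ≤ Real.sin (Real.pi / 2 * x) := by
  have hpi := Real.pi_pos
  have h := Real.mul_le_sin (x := Real.pi / 2 * x) (by positivity) (by nlinarith)
  rwa [← mul_assoc, div_mul_div_cancel₀ (by positivity), div_self (by positivity), one_mul] at h

lemma wordProb_div_two_le {w : ℕ → Bool} {n : ℕ} (h : w (n + 1) = false) :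
    wordProb w (n + 1) / 2 ≤
      ∫ x in (0 : ℝ)..1, (endDensity w (n + 1)).eval x * Real.sin (Real.pi / 2 * x) := by
  set g := endDensity w (n + 1) with hg
  have hc : Continuous fun x => g.eval x := g.continuous
  have h1 : ∫ x in (0 : ℝ)..1, (g.eval x / 2 + g.eval (1 / 2) * (x - 1 / 2)) =
      wordProb w (n + 1) / 2 := by
    rw [intervalIntegral.integral_add ((by fun_prop : Continuous _).intervalIntegrable _ _)
      ((by fun_prop : Continuous _).intervalIntegrable _ _), intervalIntegral.integral_div,
      integral_endDensity, intervalIntegral.integral_const_mul, intervalIntegral.integral_sub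
      (by simp) (by simp)]
    norm_num
  rw [← h1]
  refine intervalIntegral.integral_mono_on zero_le_one
    ((by fun_prop : Continuous _).intervalIntegrable _ _)
    ((by fun_prop : Continuous _).intervalIntegrable _ _) fun x hx => ?_
  have h2 := le_sin_pi_div_two_mul hx.1 hx.2
  have h3 : 0 ≤ g.eval x := eval_endDensity_nonneg w (n + 1) hx.1 hx.2
  have h4 : 0 ≤ (x - 1 / 2) * (g.eval x - g.eval (1 / 2)) := by
    rcases le_total x (1 / 2) with hx' | hx'
    · exact mul_nonneg_of_nonpos_of_nonpos (by linarith)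
        (sub_nonpos.2 (eval_endDensity_mono h hx.1 hx' (by norm_num)))
    · exact mul_nonneg (by linarith)
        (sub_nonneg.2 (eval_endDensity_mono h (by norm_num) hx' hx.2))
  nlinarith [mul_le_mul_of_nonneg_left h2 h3]

/-- The moment of the end density against the eigenfunction of the alternating continuation. -/
noncomputable def alternatingMoment (w : ℕ → Bool) (n : ℕ) : ℝ :=
  if w n then ∫ x in (0 : ℝ)..1, (endDensity w n).eval x * Real.cos (Real.pi / 2 * x)
  else ∫ x in (0 : ℝ)..1, (endDensity w n).eval x * Real.sin (Real.pi / 2 * x)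

lemma alternatingMoment_le (w : ℕ → Bool) (n : ℕ) : alternatingMoment w n ≤ wordProb w n := by
  have hc : Continuous fun x => (endDensity w n).eval x := (endDensity w n).continuous
  rw [← integral_endDensity, alternatingMoment]
  split_ifs
  · exact intervalIntegral.integral_mono_on zero_le_one
      ((by fun_prop : Continuous _).intervalIntegrable _ _) (intervalIntegrable_eval _ _ _)
      fun x hx => mul_le_of_le_one_right (eval_endDensity_nonneg w n hx.1 hx.2) (Real.cos_le_one _)
  · exact intervalIntegral.integral_mono_on zero_le_one
      ((by fun_prop : Continuous _).intervalIntegrable _ _) (intervalIntegrable_eval _ _ _)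
      fun x hx => mul_le_of_le_one_right (eval_endDensity_nonneg w n hx.1 hx.2) (Real.sin_le_one _)

lemma alternatingMoment_succ {w : ℕ → Bool} {n : ℕ} (h : w (n + 1) = !w n) :
    alternatingMoment w (n + 1) = 2 / Real.pi * alternatingMoment w n := by
  unfold alternatingMoment
  cases hn : w n with
  | false =>
    rw [hn] at h
    simp only [h, Bool.not_false, if_true, Bool.false_eq_true, if_false]
    exact integral_endDensity_mul_cos h
  | true =>
    rw [hn] at h
    simp only [h, Bool.not_true, if_true, Bool.false_eq_true, if_false]
    exact integral_endDensity_mul_sin h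

lemma alternatingMoment_zero {w : ℕ → Bool} (h : w 0 = false) :
    alternatingMoment w 0 = 2 / Real.pi := by
  simp only [alternatingMoment, h, Bool.false_eq_true, if_false, endDensity_zero,
    Polynomial.eval_one, one_mul]
  rw [intervalIntegral.integral_eq_sub_of_hasDerivAt
    (fun x _ => hasDerivAt_neg_cos_pi_div_two_mul x)
    ((by fun_prop : Continuous _).intervalIntegrable _ _)]
  simp

/-- The word that appends `false` while the probability is at least `L ^ n`, and alternates
otherwise. -/
def IsThresholdWord (L : ℝ) (w : ℕ → Bool) : Prop :=
  w 0 = false ∧ ∀ n, (L ^ n ≤ wordProb w n → w (n + 1) = false) ∧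
    (wordProb w n < L ^ n → w (n + 1) = !w n)

open Classical in
/-- The row of counts together with the last letter, built along the threshold word. -/
noncomputable def thresholdState (L : ℝ) : ℕ → (ℕ → ℕ) × Bool
  | 0 => (fun j => if j = 0 then 1 else 0, false)
  | n + 1 =>
    let s := thresholdState L n
    let a := if L ^ n ≤ (∑ j ∈ Finset.range (n + 1), s.1 j : ℕ) / ((n + 1).factorial : ℝ)
      then false else !s.2
    (nextRow n a s.1, a)

lemma exists_isThresholdWord (L : ℝ) : ∃ w, IsThresholdWord L w := by
  let w : ℕ → Bool := fun n => (thresholdState L n).2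
  have h : ∀ n, endCount w n = (thresholdState L n).1 := by
    intro n
    induction n with
    | zero =>
      funext j
      simp [endCount, thresholdState]
    | succ n ih =>
      funext j
      rw [endCount, ih]
      rfl
  refine ⟨w, rfl, fun n => ⟨fun hn => ?_, fun hn => ?_⟩⟩
  · rw [wordProb, h] at hn
    exact if_pos hn
  · rw [wordProb, h] at hn
    exact if_neg (not_le.2 hn)

lemma IsThresholdWord.wordProb_le {L : ℝ} {w : ℕ → Bool} (hw : IsThresholdWord L w)
    (hL : 0 < L) (hL1 : L ≤ 1) (n : ℕ) :
    wordProb w n ≤ 1 / L * Real.exp (1 / L) * L ^ n := by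
  have hL2 : 1 ≤ 1 / L := (one_le_div hL).2 hL1
  have key : ∀ n, wordProb w n < L ^ n ∨ ∃ m ≤ n, wordProb w m ≤ L ^ m * (1 / L) ∧
      ∀ i, m ≤ i → i < n → w (i + 1) = false := by
    intro n
    induction n with
    | zero =>
      refine Or.inr ⟨0, le_rfl, ?_, fun i _ h => absurd h (by omega)⟩
      simpa [wordProb_zero] using hL2
    | succ n ih =>
      rcases lt_or_ge (wordProb w n) (L ^ n) with h | h
      · refine Or.inr ⟨n + 1, le_rfl, ?_, fun i h h' => absurd h' (by omega)⟩
        refine (wordProb_succ_le w n).trans (h.le.trans (le_of_eq ?_))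
        field_simp
        ring
      · obtain ⟨m, hm, hm', hrun⟩ := ih.resolve_left (not_lt.2 h)
        refine Or.inr ⟨m, by omega, hm', fun i hi hi' => ?_⟩
        rcases Nat.lt_or_ge i n with h' | h'
        · exact hrun i hi h'
        · obtain rfl : i = n := by omega
          exact (hw.2 i).1 h
  have hexp : 1 ≤ Real.exp (1 / L) := Real.one_le_exp (by positivity)
  rcases key n with h | ⟨m, hm, hm', hrun⟩
  · refine h.le.trans (le_mul_of_one_le_left (by positivity) ?_)
    nlinarith
  · obtain ⟨k, rfl⟩ := Nat.exists_eq_add_of_le hm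
    calc wordProb w (m + k) ≤ wordProb w m / k.factorial := wordProb_le_of_run k hrun
      _ ≤ L ^ m * (1 / L) / k.factorial := by gcongr
      _ = 1 / L * ((1 / L) ^ k / k.factorial) * L ^ (m + k) := by
        rw [pow_add, div_pow, one_pow]
        field_simp
      _ ≤ _ := by
        gcongr
        exact Real.pow_div_factorial_le_exp _ (by positivity) k

lemma IsThresholdWord.le_wordProb {L : ℝ} {w : ℕ → Bool} (hw : IsThresholdWord L w)
    (hL : 0 < L) (hL1 : L ≤ 2 / Real.pi) (n : ℕ) :
    L ^ n / (2 * (n + 1)) ≤ wordProb w n := by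
  refine le_trans ?_ (alternatingMoment_le w n)
  have hpi : (2 : ℝ) / Real.pi ≤ 1 := (div_le_one Real.pi_pos).2 Real.two_le_pi
  have hpi' : (1 : ℝ) / 2 ≤ 2 / Real.pi := by
    rw [div_le_div_iff₀ two_pos Real.pi_pos]
    linarith [Real.pi_le_four]
  induction n with
  | zero =>
    rw [alternatingMoment_zero hw.1]
    simpa using hpi'
  | succ n ih =>
    have hmul : L ^ (n + 1) ≤ L ^ n := pow_le_pow_of_le_one hL.le (hL1.trans hpi) (by omega)
    push_cast
    rcases lt_or_ge (wordProb w n) (L ^ n) with h | h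
    · rw [alternatingMoment_succ ((hw.2 n).2 h)]
      calc L ^ (n + 1) / (2 * ((n : ℝ) + 1 + 1)) ≤ L ^ (n + 1) / (2 * ((n : ℝ) + 1)) := by
            gcongr
            linarith
        _ = L * (L ^ n / (2 * ((n : ℝ) + 1))) := by ring
        _ ≤ _ := by gcongr
    · have hf := (hw.2 n).1 h
      have h1 := wordProb_div_two_le hf
      have h2 := div_le_wordProb_succ w n
      simp only [alternatingMoment, hf, Bool.false_eq_true, if_false]
      refine le_trans ?_ h1
      calc L ^ (n + 1) / (2 * ((n : ℝ) + 1 + 1)) ≤ wordProb w n / (2 * ((n : ℝ) + 1 + 1)) := by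
            gcongr
            exact hmul.trans h
        _ = wordProb w n / (n + 2) / 2 := by
            rw [div_div]
            congr 1
            ring
        _ ≤ _ := by gcongr

lemma tendsto_const_rpow_one_div_nat {c : ℝ} (hc : 0 < c) :
    Tendsto (fun n : ℕ => c ^ (1 / (n : ℝ))) atTop (nhds 1) := by
  have h := (Real.continuous_const_rpow hc.ne').tendsto 0
  rw [Real.rpow_zero] at h
  exact h.comp tendsto_one_div_atTop_nhds_zero_nat

lemma tendsto_mul_pow_rpow_one_div {u : ℕ → ℝ} (hu : ∀ n, 0 ≤ u n)
    (h : Tendsto (fun n : ℕ => u n ^ (1 / (n : ℝ))) atTop (nhds 1)) {L : ℝ} (hL : 0 ≤ L) :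
    Tendsto (fun n : ℕ => (u n * L ^ n) ^ (1 / (n : ℝ))) atTop (nhds L) := by
  have h1 := h.mul_const L
  rw [one_mul] at h1
  refine h1.congr' ?_
  filter_upwards [eventually_ne_atTop 0] with n hn
  rw [Real.mul_rpow (hu n) (by positivity), one_div, Real.pow_rpow_inv_natCast hL hn]

lemma tendsto_of_isThresholdWord {L : ℝ} {w : ℕ → Bool} (hw : IsThresholdWord L w)
    (hL : 0 < L) (hL1 : L ≤ 2 / Real.pi) :
    Tendsto (fun n : ℕ => ((dCount w n : ℝ) / (Nat.factorial n : ℝ)) ^ (1 / (n : ℝ)))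
      atTop (nhds L) := by
  have hL2 : L ≤ 1 := hL1.trans ((div_le_one Real.pi_pos).2 Real.two_le_pi)
  have hlow : Tendsto (fun n : ℕ => (1 / (2 * (n : ℝ))) ^ (1 / (n : ℝ))) atTop (nhds 1) := by
    have h := ((tendsto_const_rpow_one_div_nat two_pos).mul
      (tendsto_rpow_div.comp tendsto_natCast_atTop_atTop)).inv₀ (by norm_num)
    rw [one_mul, inv_one] at h
    refine h.congr fun n => ?_
    simp only [Function.comp]
    rw [one_div (2 * (n : ℝ)), Real.inv_rpow (by positivity),
      Real.mul_rpow (by positivity) (by positivity)]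
  have hc : 0 < 1 / L * Real.exp (1 / L) * (1 / L) := by positivity
  refine tendsto_of_tendsto_of_tendsto_of_le_of_le'
    (tendsto_mul_pow_rpow_one_div (fun n => by positivity) hlow hL.le)
    (tendsto_mul_pow_rpow_one_div (fun _ => hc.le) (tendsto_const_rpow_one_div_nat hc) hL.le)
    ?_ ?_
  · filter_upwards [eventually_ne_atTop 0] with n hn
    obtain ⟨n, rfl⟩ := Nat.exists_eq_succ_of_ne_zero hn
    rw [Nat.succ_eq_add_one, dCount_div_factorial]
    refine Real.rpow_le_rpow (by positivity) ?_ (by positivity)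
    refine le_trans ?_ (hw.le_wordProb hL hL1 n)
    rw [one_div_mul_eq_div]
    push_cast
    gcongr ?_ / _
    exact pow_le_pow_of_le_one hL.le hL2 (by omega)
  · filter_upwards [eventually_ne_atTop 0] with n hn
    obtain ⟨n, rfl⟩ := Nat.exists_eq_succ_of_ne_zero hn
    rw [Nat.succ_eq_add_one, dCount_div_factorial]
    refine Real.rpow_le_rpow (wordProb_nonneg w n) ?_ (by positivity)
    refine (hw.wordProb_le hL hL2 n).trans (le_of_eq ?_)
    field_simp
    ring

lemma wordProb_const_false_le (n : ℕ) : wordProb (fun _ => false) n ≤ 1 / n.factorial := by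
  simpa [wordProb_zero] using
    wordProb_le_of_run (w := fun _ => false) (m := 0) n (fun _ _ _ => rfl)

lemma tendsto_const_false :
    Tendsto (fun n : ℕ => ((dCount (fun _ => false) n : ℝ) / (Nat.factorial n : ℝ)) ^
      (1 / (n : ℝ))) atTop (nhds 0) := by
  refine tendsto_order.2 ⟨fun a ha => Eventually.of_forall fun n => ha.trans_le (by positivity),
    fun ε hε => ?_⟩
  have hδ : 0 < ε / 2 := half_pos hε
  have hc : 0 < Real.exp (1 / (ε / 2)) * (1 / (ε / 2)) := by positivity
  have h := tendsto_mul_pow_rpow_one_div (fun _ => hc.le) (tendsto_const_rpow_one_div_nat hc) hδ.le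
  filter_upwards [h.eventually_lt_const (half_lt_self hε), eventually_ne_atTop 0] with n hn hn0
  refine lt_of_le_of_lt ?_ hn
  obtain ⟨n, rfl⟩ := Nat.exists_eq_succ_of_ne_zero hn0
  rw [Nat.succ_eq_add_one, dCount_div_factorial]
  refine Real.rpow_le_rpow (wordProb_nonneg _ n) ?_ (by positivity)
  calc _ ≤ 1 / (n.factorial : ℝ) := wordProb_const_false_le n
    _ = (1 / (ε / 2)) ^ n / n.factorial * (ε / 2) ^ n := by
      rw [div_pow, one_pow]
      field_simp
    _ ≤ Real.exp (1 / (ε / 2)) * (ε / 2) ^ n := by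
      gcongr
      exact Real.pow_div_factorial_le_exp _ (by positivity) n
    _ = _ := by
      rw [pow_succ]
      field_simp

theorem stmt0 (L : ℝ) (hL0 : 0 ≤ L) (hL1 : L ≤ 2 / Real.pi) :
    ∃ w : ℕ → Bool,
      Tendsto (fun n : ℕ => ((dCount w n : ℝ) / (Nat.factorial n : ℝ)) ^ (1 / (n : ℝ)))
        atTop (nhds L) := by
  rcases hL0.eq_or_lt with rfl | hL
  · exact ⟨_, tendsto_const_false⟩
  · obtain ⟨w, hw⟩ := exists_isThresholdWord L
    exact ⟨w, tendsto_of_isThresholdWord hw hL hL1⟩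
end

section
/- For all real numbers L, L' with 0 ≤ L ≤ L' ≤ 2/π, there exists an infinite binary word w such that liminf_{n→∞} (d_n(w)/n!)^{1/n} = L and limsup_{n→∞} (d_n(w)/n!)^{1/n} = L'. -/
open Filter

/-- The permutation `π` has descent pattern `w`. -/
def HasDescents (w : ℕ → Bool) (n : ℕ) (π : Equiv.Perm (Fin n)) : Prop :=
  ∀ i : ℕ, ∀ h : i + 1 < n,
    (π ⟨i + 1, h⟩ < π ⟨i, Nat.lt_of_succ_lt h⟩ ↔ w (i + 1) = true)

open Classical in
/-- The number of permutations of size `n + 1` with descent pattern `w` and last value `j`. -/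
noncomputable def lastCount (w : ℕ → Bool) (n : ℕ) (j : Fin (n + 1)) : ℕ :=
  (Finset.univ.filter fun π : Equiv.Perm (Fin (n + 1)) =>
    HasDescents w (n + 1) π ∧ π (Fin.last n) = j).card

lemma dCount_congr {w w' : ℕ → Bool} {n : ℕ} (h : ∀ i < n, w i = w' i) :
    dCount w n = dCount w' n := by
  unfold dCount
  congr 1
  refine congrArg _ (funext fun π => propext ?_)
  refine forall_congr' fun i => forall_congr' fun hi => ?_
  rw [h _ hi]

lemma dCount_succ_eq_sum (w : ℕ → Bool) (n : ℕ) :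
    dCount w (n + 1) = ∑ j, lastCount w n j := by
  classical
  have h1 : dCount w (n + 1) = (Finset.univ.filter fun π : Equiv.Perm (Fin (n + 1)) =>
      HasDescents w (n + 1) π).card := by
    unfold dCount HasDescents
    rw [Nat.card_eq_fintype_card, Fintype.card_subtype]
  rw [h1, Finset.card_eq_sum_card_fiberwise (f := fun π => π (Fin.last n)) (t := Finset.univ)
    (fun _ _ => by simp)]
  refine Finset.sum_congr rfl fun j _ => ?_
  rw [lastCount, Finset.filter_filter]

/-- Append the value `j` to a permutation, shifting up the values that are at least `j`. -/
noncomputable def appendValue {n : ℕ} (j : Fin (n + 1)) (σ : Equiv.Perm (Fin n)) :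
    Equiv.Perm (Fin (n + 1)) :=
  (finSuccEquiv' (Fin.last n)).trans ((Equiv.optionCongr σ).trans (finSuccEquiv' j).symm)

lemma appendValue_last {n : ℕ} (j : Fin (n + 1)) (σ : Equiv.Perm (Fin n)) :
    appendValue j σ (Fin.last n) = j := by
  simp [appendValue]

lemma appendValue_castSucc {n : ℕ} (j : Fin (n + 1)) (σ : Equiv.Perm (Fin n)) (i : Fin n) :
    appendValue j σ i.castSucc = j.succAbove (σ i) := by
  simp [appendValue, ← Fin.succAbove_last]

lemma exists_appendValue_eq {n : ℕ} (j : Fin (n + 1)) (π : Equiv.Perm (Fin (n + 1)))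
    (h : π (Fin.last n) = j) : ∃ σ, appendValue j σ = π := by
  have hne : ∀ i : Fin n, ∃ k, j.succAbove k = π i.castSucc := fun i => by
    refine Fin.exists_succAbove_eq ?_
    rw [← h]
    exact fun hh => (Fin.castSucc_lt_last i).ne (π.injective hh)
  choose f hf using hne
  have hinj : Function.Injective f := fun a b hab => by
    have := hf a
    rw [hab, hf b] at this
    exact (Fin.castSucc_injective _ (π.injective this)).symm
  refine ⟨Equiv.ofBijective f (Finite.injective_iff_bijective.1 hinj), ?_⟩
  ext i
  induction i using Fin.lastCases with
  | last => rw [appendValue_last, h]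
  | cast i => rw [appendValue_castSucc, Equiv.ofBijective_apply, hf]

lemma hasDescents_appendValue (w : ℕ → Bool) (n : ℕ) (j : Fin (n + 2))
    (σ : Equiv.Perm (Fin (n + 1))) :
    HasDescents w (n + 2) (appendValue j σ) ↔
      HasDescents w (n + 1) σ ∧ (j ≤ (σ (Fin.last n)).castSucc ↔ w (n + 1) = true) := by
  have hlast : (appendValue j σ ⟨n + 1, by omega⟩ < appendValue j σ ⟨n, by omega⟩) ↔
      j ≤ (σ (Fin.last n)).castSucc := by
    have h1 : (⟨n + 1, by omega⟩ : Fin (n + 2)) = Fin.last (n + 1) := rfl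
    have h2 : (⟨n, by omega⟩ : Fin (n + 2)) = (Fin.last n).castSucc := rfl
    rw [h1, h2, appendValue_last, appendValue_castSucc, Fin.lt_succAbove_iff_le_castSucc]
  have hmid : ∀ i (h : i + 1 < n + 1),
      (appendValue j σ ⟨i + 1, by omega⟩ < appendValue j σ ⟨i, by omega⟩) ↔
        σ ⟨i + 1, h⟩ < σ ⟨i, by omega⟩ := fun i h => by
    have h1 : (⟨i + 1, by omega⟩ : Fin (n + 2)) = (⟨i + 1, h⟩ : Fin (n + 1)).castSucc := rfl
    have h2 : (⟨i, by omega⟩ : Fin (n + 2)) = (⟨i, by omega⟩ : Fin (n + 1)).castSucc := rfl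
    rw [h1, h2, appendValue_castSucc, appendValue_castSucc, Fin.succAbove_lt_succAbove_iff]
  constructor
  · intro H
    exact ⟨fun i h => (hmid i h).symm.trans (H i (by omega)), hlast.symm.trans (H n (by omega))⟩
  · rintro ⟨H, H'⟩ i h
    rcases Nat.lt_or_ge (i + 1) (n + 1) with hi | hi
    · exact (hmid i hi).trans (H i hi)
    · obtain rfl : i = n := by omega
      exact hlast.trans H'

open Classical in
lemma lastCount_succ (w : ℕ → Bool) (n : ℕ) (j : Fin (n + 2)) :
    lastCount w (n + 1) j =
      ∑ i : Fin (n + 1), if (j ≤ i.castSucc ↔ w (n + 1) = true) then lastCount w n i else 0 := by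
  have h1 : lastCount w (n + 1) j = (Finset.univ.filter fun σ : Equiv.Perm (Fin (n + 1)) =>
      HasDescents w (n + 1) σ ∧ (j ≤ (σ (Fin.last n)).castSucc ↔ w (n + 1) = true)).card := by
    symm
    refine Finset.card_bij (fun σ _ => appendValue j σ) ?_ ?_ ?_
    · intro σ hσ
      rw [Finset.mem_filter] at hσ ⊢
      exact ⟨Finset.mem_univ _, (hasDescents_appendValue w n j σ).2 hσ.2, appendValue_last j σ⟩
    · intro σ _ τ _ h
      ext i
      have := congrArg (fun π : Equiv.Perm (Fin (n + 2)) => π i.castSucc) h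
      simp only [appendValue_castSucc] at this
      rw [Fin.succAbove_right_injective this]
    · intro π hπ
      rw [Finset.mem_filter] at hπ
      obtain ⟨σ, rfl⟩ := exists_appendValue_eq j π hπ.2.2
      exact ⟨σ, Finset.mem_filter.2
        ⟨Finset.mem_univ _, (hasDescents_appendValue w n j σ).1 hπ.2.1⟩, rfl⟩
  rw [h1, Finset.card_eq_sum_card_fiberwise (f := fun π => π (Fin.last n)) (t := Finset.univ)
    (fun _ _ => by simp)]
  refine Finset.sum_congr rfl fun i _ => ?_
  rw [Finset.filter_filter]
  split_ifs with h
  · rw [lastCount]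
    congr 1
    ext π
    simp only [Finset.mem_filter, Finset.mem_univ, true_and]
    constructor
    · rintro ⟨⟨a, -⟩, b⟩
      exact ⟨a, b⟩
    · rintro ⟨a, b⟩
      exact ⟨⟨a, by rwa [b]⟩, b⟩
  · rw [Finset.card_eq_zero, Finset.filter_eq_empty_iff]
    rintro π - ⟨⟨-, a⟩, b⟩
    rw [b] at a
    exact h a

lemma dCount_succ_le (w : ℕ → Bool) (n : ℕ) : dCount w (n + 1) ≤ dCount w (n + 2) := by
  classical
  rw [dCount_succ_eq_sum, dCount_succ_eq_sum]
  obtain ⟨j, hj⟩ : ∃ j : Fin (n + 2), ∀ i : Fin (n + 1),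
      (j ≤ i.castSucc ↔ w (n + 1) = true) := by
    cases h : w (n + 1)
    · exact ⟨Fin.last _, fun i => by simp⟩
    · exact ⟨0, fun i => by simp⟩
  calc ∑ i, lastCount w n i = lastCount w (n + 1) j := by
        rw [lastCount_succ]
        exact Finset.sum_congr rfl fun i _ => by rw [if_pos (hj i)]
    _ ≤ _ := Finset.single_le_sum (f := lastCount w (n + 1)) (fun _ _ => Nat.zero_le _)
        (Finset.mem_univ j)

lemma dCount_le_mul (w : ℕ → Bool) (n : ℕ) :
    dCount w (n + 2) ≤ (n + 2) * dCount w (n + 1) := by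
  classical
  rw [dCount_succ_eq_sum, dCount_succ_eq_sum]
  calc ∑ j, lastCount w (n + 1) j ≤ ∑ _j : Fin (n + 2), ∑ i, lastCount w n i := by
        refine Finset.sum_le_sum fun j _ => ?_
        rw [lastCount_succ]
        refine Finset.sum_le_sum fun i _ => ?_
        split_ifs <;> omega
    _ = _ := by simp

lemma dCount_one (w : ℕ → Bool) : dCount w 1 = 1 := by
  unfold dCount
  rw [Nat.card_eq_one_iff_unique]
  exact ⟨inferInstance, ⟨⟨1, fun i h => by omega⟩⟩⟩

/-- The Bernstein-type kernel `x ^ a / a! * (1 - x) ^ b / b!`. -/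
noncomputable def bernKernel (a b : ℕ) (x : ℝ) : ℝ :=
  x ^ a / (a.factorial : ℝ) * ((1 - x) ^ b / (b.factorial : ℝ))

lemma continuous_bernKernel (a b : ℕ) : Continuous (bernKernel a b) := by
  unfold bernKernel
  fun_prop

lemma hasDerivAt_pow_div_factorial (a : ℕ) (x : ℝ) :
    HasDerivAt (fun x : ℝ => x ^ (a + 1) / ((a + 1).factorial : ℝ))
      (x ^ a / (a.factorial : ℝ)) x := by
  refine ((hasDerivAt_pow (a + 1) x).div_const ((a + 1).factorial : ℝ)).congr_deriv ?_
  rw [Nat.factorial_succ]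
  have := Nat.factorial_ne_zero a
  push_cast
  field_simp

lemma hasDerivAt_one_sub_pow_div_factorial (b : ℕ) (x : ℝ) :
    HasDerivAt (fun x : ℝ => (1 - x) ^ (b + 1) / ((b + 1).factorial : ℝ))
      (-((1 - x) ^ b / (b.factorial : ℝ))) x := by
  refine HasDerivAt.congr_deriv ((hasDerivAt_pow_div_factorial b (1 - x)).comp x
    ((hasDerivAt_id x).const_sub 1)) ?_
  simp

lemma hasDerivAt_bernKernel_succ_succ (a b : ℕ) (x : ℝ) :
    HasDerivAt (bernKernel (a + 1) (b + 1)) (bernKernel a (b + 1) x - bernKernel (a + 1) b x) x := by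
  refine HasDerivAt.congr_deriv ((hasDerivAt_pow_div_factorial a x).mul
    (hasDerivAt_one_sub_pow_div_factorial b x)) ?_
  unfold bernKernel
  ring

lemma hasDerivAt_sum_bernKernel (n i : ℕ) (hi : i ≤ n) (x : ℝ) :
    HasDerivAt (fun x => ∑ j ∈ Finset.range (i + 1), bernKernel j (n + 1 - j) x)
      (-bernKernel i (n - i) x) x := by
  induction i with
  | zero =>
    simpa [bernKernel] using hasDerivAt_one_sub_pow_div_factorial n x
  | succ i ih =>
    obtain ⟨k, rfl⟩ : ∃ k, n = i + 1 + k := ⟨n - (i + 1), by omega⟩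
    have h := (ih (by omega)).add (hasDerivAt_bernKernel_succ_succ i k x)
    have e1 : i + 1 + k - i = k + 1 := by omega
    have e2 : i + 1 + k - (i + 1) = k := by omega
    have e3 : i + 1 + k + 1 - (i + 1) = k + 1 := by omega
    rw [e1] at h
    rw [e2]
    have hf : (fun x => ∑ j ∈ Finset.range (i + 1 + 1), bernKernel j (i + 1 + k + 1 - j) x) =
        (fun x => ∑ j ∈ Finset.range (i + 1), bernKernel j (i + 1 + k + 1 - j) x) +
          bernKernel (i + 1) (k + 1) := by
      funext y
      rw [Finset.sum_range_succ, e3]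
      rfl
    rw [hf]
    exact h.congr_deriv (by ring)

lemma sum_bernKernel (n : ℕ) (x : ℝ) :
    ∑ j ∈ Finset.range (n + 1), bernKernel j (n - j) x = 1 / (n.factorial : ℝ) := by
  have h := add_pow x (1 - x) n
  rw [add_sub_cancel, one_pow] at h
  rw [h, Finset.sum_div]
  refine Finset.sum_congr rfl fun j hj => ?_
  have hj' : j ≤ n := by simpa [Nat.lt_succ_iff] using hj
  rw [Nat.cast_choose ℝ hj', bernKernel]
  have h1 := Nat.factorial_ne_zero n
  have h2 := Nat.factorial_ne_zero j
  have h3 := Nat.factorial_ne_zero (n - j)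
  field_simp

lemma integral_bernKernel_right (n i : ℕ) (hi : i ≤ n) (x : ℝ) :
    ∫ t in x..1, bernKernel i (n - i) t =
      ∑ j ∈ Finset.range (i + 1), bernKernel j (n + 1 - j) x := by
  have h := intervalIntegral.integral_eq_sub_of_hasDerivAt (a := x) (b := 1)
    (fun t _ => hasDerivAt_sum_bernKernel n i hi t)
    ((continuous_bernKernel i (n - i)).neg.intervalIntegrable _ _)
  rw [intervalIntegral.integral_neg] at h
  have h0 : ∑ j ∈ Finset.range (i + 1), bernKernel j (n + 1 - j) 1 = 0 := by
    refine Finset.sum_eq_zero fun j hj => ?_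
    have hj' : n + 1 - j ≠ 0 := by
      have := Finset.mem_range.1 hj
      omega
    simp [bernKernel, hj']
  rw [h0] at h
  linarith

lemma integral_bernKernel_zero_one (n i : ℕ) (hi : i ≤ n) :
    ∫ t in (0 : ℝ)..1, bernKernel i (n - i) t = 1 / ((n + 1).factorial : ℝ) := by
  rw [integral_bernKernel_right n i hi, Finset.sum_range_succ']
  rw [Finset.sum_eq_zero fun j _ => by simp [bernKernel]]
  simp [bernKernel]

lemma integral_bernKernel_left (n i : ℕ) (hi : i ≤ n) (x : ℝ) :
    ∫ t in (0 : ℝ)..x, bernKernel i (n - i) t =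
      ∑ j ∈ (Finset.range (n + 2)).filter (fun j => ¬ j ≤ i), bernKernel j (n + 1 - j) x := by
  have hint := fun a b => (continuous_bernKernel i (n - i)).intervalIntegrable
    (μ := MeasureTheory.volume) a b
  have h := intervalIntegral.integral_add_adjacent_intervals (hint 0 x) (hint x 1)
  rw [integral_bernKernel_zero_one n i hi, integral_bernKernel_right n i hi,
    ← sum_bernKernel (n + 1) x,
    ← Finset.sum_filter_add_sum_filter_not (Finset.range (n + 1 + 1)) (fun j => j ≤ i)] at h
  have h2 : (Finset.range (n + 1 + 1)).filter (fun j => j ≤ i) = Finset.range (i + 1) := by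
    ext j
    simp only [Finset.mem_filter, Finset.mem_range]
    omega
  rw [h2] at h
  linarith

lemma integral_sum_bernKernel (n : ℕ) (c : Fin (n + 1) → ℝ) (a b : ℝ) :
    ∫ t in a..b, ∑ i : Fin (n + 1), c i * bernKernel i (n - i) t =
      ∑ i : Fin (n + 1), c i * ∫ t in a..b, bernKernel i (n - i) t := by
  rw [intervalIntegral.integral_finsetSum (f := fun (i : Fin (n + 1)) t =>
    c i * bernKernel i (n - i) t) fun i _ =>
      ((continuous_bernKernel i (n - i)).const_mul _).intervalIntegrable _ _]
  simp only [intervalIntegral.integral_const_mul]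

/-- The density of the last of `n + 1` independent uniform variables on the event that they have
descent pattern `w`. -/
noncomputable def lastDensity (w : ℕ → Bool) : ℕ → ℝ → ℝ
  | 0, _ => 1
  | n + 1, x => if w (n + 1) = true then ∫ t in x..1, lastDensity w n t
      else ∫ t in (0 : ℝ)..x, lastDensity w n t

lemma lastDensity_eq_sum (w : ℕ → Bool) (n : ℕ) (x : ℝ) :
    lastDensity w n x = ∑ j : Fin (n + 1), (lastCount w n j : ℝ) * bernKernel j (n - j) x := by
  classical
  induction n generalizing x with
  | zero =>
    have h := dCount_succ_eq_sum w 0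
    rw [dCount_one] at h
    simp only [Fin.sum_univ_one, Nat.reduceAdd] at h ⊢
    rw [← h]
    simp [lastDensity, bernKernel]
  | succ n ih =>
    have hint : ∀ a b, ∫ t in a..b, lastDensity w n t =
        ∑ i : Fin (n + 1), (lastCount w n i : ℝ) * ∫ t in a..b, bernKernel i (n - i) t := by
      intro a b
      simp_rw [ih]
      exact integral_sum_bernKernel n _ a b
    have hker : ∀ i : Fin (n + 1), (if w (n + 1) = true then ∫ t in x..1, bernKernel i (n - i) t
        else ∫ t in (0 : ℝ)..x, bernKernel i (n - i) t) =
        ∑ j : Fin (n + 2), if (j ≤ i.castSucc ↔ w (n + 1) = true) then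
          bernKernel j (n + 1 - j) x else 0 := by
      intro i
      have hi : (i : ℕ) ≤ n := by omega
      rw [integral_bernKernel_right n i hi, integral_bernKernel_left n i hi]
      simp only [Fin.le_def, Fin.val_castSucc]
      rw [Fin.sum_univ_eq_sum_range (fun j => if (j ≤ (i : ℕ) ↔ w (n + 1) = true) then
          bernKernel j (n + 1 - j) x else 0) (n + 2)]
      rw [← Finset.sum_filter]
      split_ifs with h
      · refine Finset.sum_congr ?_ fun _ _ => rfl
        ext j
        simp only [Finset.mem_filter, Finset.mem_range, h, iff_true]
        omega
      · simp [h]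
    have hL : lastDensity w (n + 1) x = ∑ i : Fin (n + 1), (lastCount w n i : ℝ) *
        (if w (n + 1) = true then ∫ t in x..1, bernKernel i (n - i) t
        else ∫ t in (0 : ℝ)..x, bernKernel i (n - i) t) := by
      rw [lastDensity]
      split_ifs with h <;> rw [hint]
    rw [hL]
    simp_rw [hker, Finset.mul_sum]
    rw [Finset.sum_comm]
    refine Finset.sum_congr rfl fun j _ => ?_
    rw [lastCount_succ, Nat.cast_sum, Finset.sum_mul]
    refine Finset.sum_congr rfl fun i _ => ?_
    split_ifs <;> simp

lemma continuous_lastDensity (w : ℕ → Bool) (n : ℕ) : Continuous (lastDensity w n) := by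
  rw [funext (lastDensity_eq_sum w n)]
  exact continuous_finsetSum _ fun j _ => (continuous_bernKernel _ _).const_mul _

lemma lastDensity_nonneg (w : ℕ → Bool) (n : ℕ) {x : ℝ} (h0 : 0 ≤ x) (h1 : x ≤ 1) :
    0 ≤ lastDensity w n x := by
  rw [lastDensity_eq_sum]
  have : 0 ≤ 1 - x := by linarith
  exact Finset.sum_nonneg fun j _ => by unfold bernKernel; positivity

/-- The probability that a uniform random permutation of size `n` has descent pattern `w`. -/
noncomputable def descentProb (w : ℕ → Bool) (n : ℕ) : ℝ :=
  (dCount w n : ℝ) / (Nat.factorial n : ℝ)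

lemma integral_lastDensity (w : ℕ → Bool) (n : ℕ) :
    ∫ t in (0 : ℝ)..1, lastDensity w n t = descentProb w (n + 1) := by
  simp_rw [lastDensity_eq_sum w n]
  rw [integral_sum_bernKernel n (fun i => (lastCount w n i : ℝ)), descentProb, dCount_succ_eq_sum,
    Nat.cast_sum, Finset.sum_div]
  refine Finset.sum_congr rfl fun i _ => ?_
  rw [integral_bernKernel_zero_one n i (by omega)]
  ring

lemma descentProb_one (w : ℕ → Bool) : descentProb w 1 = 1 := by
  simp [descentProb, dCount_one]

lemma descentProb_congr {w w' : ℕ → Bool} {n : ℕ} (h : ∀ i < n, w i = w' i) :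
    descentProb w n = descentProb w' n := by
  rw [descentProb, descentProb, dCount_congr h]

lemma descentProb_succ_le (w : ℕ → Bool) (n : ℕ) :
    descentProb w (n + 2) ≤ descentProb w (n + 1) := by
  have h : (dCount w (n + 2) : ℝ) ≤ (n + 2) * dCount w (n + 1) := by
    exact_mod_cast dCount_le_mul w n
  have h1 : (0 : ℝ) < (n + 1).factorial := by positivity
  rw [descentProb, descentProb, Nat.factorial_succ, div_le_div_iff₀ (by positivity) h1]
  push_cast
  nlinarith

lemma descentProb_le_mul (w : ℕ → Bool) (n : ℕ) :
    descentProb w (n + 1) ≤ (n + 2) * descentProb w (n + 2) := by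
  have h : (dCount w (n + 1) : ℝ) ≤ dCount w (n + 2) := by
    exact_mod_cast dCount_succ_le w n
  have h1 : (0 : ℝ) < (n + 1).factorial := by positivity
  rw [descentProb, descentProb, Nat.factorial_succ (n + 1), ← mul_div_assoc,
    div_le_div_iff₀ h1 (by positivity)]
  push_cast
  have : (0 : ℝ) ≤ (n + 2) * (n + 1).factorial := by positivity
  nlinarith

lemma descentProb_pos (w : ℕ → Bool) (n : ℕ) : 0 < descentProb w (n + 1) := by
  induction n with
  | zero => simp [descentProb_one]
  | succ n ih =>
    have h := ih.trans_le (descentProb_le_mul w n)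
    exact pos_of_mul_pos_right h (by positivity)

lemma lastDensity_succ_le (w : ℕ → Bool) (n m : ℕ) (hw : ∀ i, n < i → w i = false)
    {x : ℝ} (h0 : 0 ≤ x) (h1 : x ≤ 1) :
    lastDensity w (n + m + 1) x ≤ descentProb w (n + 1) * (x ^ m / (m.factorial : ℝ)) := by
  induction m generalizing x with
  | zero =>
    rw [lastDensity, hw _ (by omega)]
    simp only [Bool.false_eq_true, if_false, pow_zero, Nat.factorial_zero, Nat.cast_one,
      div_one, mul_one]
    rw [← integral_lastDensity]
    refine intervalIntegral.integral_mono_interval le_rfl h0 h1 ?_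
      ((continuous_lastDensity w n).intervalIntegrable _ _)
    filter_upwards [MeasureTheory.ae_restrict_mem measurableSet_Ioc] with t ht
    exact lastDensity_nonneg w n ht.1.le ht.2
  | succ m ih =>
    rw [lastDensity, hw _ (by omega)]
    simp only [Bool.false_eq_true, if_false]
    have hc : Continuous fun t : ℝ => descentProb w (n + 1) * (t ^ m / (m.factorial : ℝ)) := by
      fun_prop
    have hI := intervalIntegral.integral_eq_sub_of_hasDerivAt (a := 0) (b := x)
      (fun t _ => (hasDerivAt_pow_div_factorial m t).const_mul (descentProb w (n + 1)))
      (hc.intervalIntegrable _ _)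
    calc ∫ t in (0 : ℝ)..x, lastDensity w (n + (m + 1)) t
        ≤ ∫ t in (0 : ℝ)..x, descentProb w (n + 1) * (t ^ m / (m.factorial : ℝ)) :=
          intervalIntegral.integral_mono_on h0
            ((continuous_lastDensity w _).intervalIntegrable _ _) (hc.intervalIntegrable _ _)
            fun t ht => ih ht.1 (ht.2.trans h1)
      _ = _ := by rw [hI]; simp

/-- Appending `m` ascents divides the probability by at least `m!`. -/
lemma descentProb_le_div_factorial (w : ℕ → Bool) (n m : ℕ) (hw : ∀ i, n < i → w i = false) :
    descentProb w (n + 1 + m) ≤ descentProb w (n + 1) / (m.factorial : ℝ) := by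
  cases m with
  | zero => simp
  | succ m =>
    have hc : Continuous fun t : ℝ => descentProb w (n + 1) * (t ^ m / (m.factorial : ℝ)) := by
      fun_prop
    have hI := intervalIntegral.integral_eq_sub_of_hasDerivAt (a := 0) (b := 1)
      (fun t _ => (hasDerivAt_pow_div_factorial m t).const_mul (descentProb w (n + 1)))
      (hc.intervalIntegrable _ _)
    have e : n + 1 + (m + 1) = (n + m + 1) + 1 := by ring
    rw [e, ← integral_lastDensity]
    calc ∫ t in (0 : ℝ)..1, lastDensity w (n + m + 1) t
        ≤ ∫ t in (0 : ℝ)..1, descentProb w (n + 1) * (t ^ m / (m.factorial : ℝ)) :=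
          intervalIntegral.integral_mono_on zero_le_one
            ((continuous_lastDensity w _).intervalIntegrable _ _) (hc.intervalIntegrable _ _)
            fun t ht => lastDensity_succ_le w n m hw ht.1 ht.2
      _ = _ := by rw [hI]; simp [div_eq_mul_inv]

lemma mul_integral_le_of_monotoneOn {f : ℝ → ℝ} (hc : Continuous f)
    (hf : MonotoneOn f (Set.Icc 0 1)) {x : ℝ} (h0 : 0 ≤ x) (h1 : x ≤ 1) :
    (1 - x) * ∫ t in (0 : ℝ)..1, f t ≤ ∫ t in x..1, f t := by
  have hi := fun a b => hc.intervalIntegrable (μ := MeasureTheory.volume) a b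
  have hsplit := intervalIntegral.integral_add_adjacent_intervals (hi 0 x) (hi x 1)
  have hl : ∫ t in (0 : ℝ)..x, f t ≤ ∫ _t in (0 : ℝ)..x, f x :=
    intervalIntegral.integral_mono_on h0 (hi _ _) (by simp)
      fun t ht => hf ⟨ht.1, ht.2.trans h1⟩ ⟨h0, h1⟩ ht.2
  have hr : ∫ _t in x..1, f x ≤ ∫ t in x..1, f t :=
    intervalIntegral.integral_mono_on h1 (by simp) (hi _ _)
      fun t ht => hf ⟨h0, h1⟩ ⟨h0.trans ht.1, ht.2⟩ ht.1
  simp only [intervalIntegral.integral_const, smul_eq_mul, sub_zero] at hl hr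
  rw [← hsplit]
  nlinarith [mul_le_mul_of_nonneg_left hl (sub_nonneg.2 h1), mul_le_mul_of_nonneg_left hr h0]

lemma integral_sin_pi_div_two (x : ℝ) :
    ∫ t in x..1, Real.sin (Real.pi / 2 * t) = 2 / Real.pi * Real.cos (Real.pi / 2 * x) := by
  have := Real.pi_ne_zero
  rw [intervalIntegral.integral_comp_mul_left (fun t => Real.sin t) (by positivity)]
  simp

lemma integral_cos_pi_div_two (x : ℝ) :
    ∫ t in (0 : ℝ)..x, Real.cos (Real.pi / 2 * t) = 2 / Real.pi * Real.sin (Real.pi / 2 * x) := by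
  have := Real.pi_ne_zero
  rw [intervalIntegral.integral_comp_mul_left (fun t => Real.cos t) (by positivity)]
  simp

lemma monotoneOn_lastDensity (w : ℕ → Bool) (n : ℕ) (hw : w (n + 1) = false) :
    MonotoneOn (lastDensity w (n + 1)) (Set.Icc 0 1) := by
  intro x hx y hy hxy
  have hi := fun a b => (continuous_lastDensity w n).intervalIntegrable
    (μ := MeasureTheory.volume) a b
  simp only [lastDensity, hw, Bool.false_eq_true, if_false]
  rw [← intervalIntegral.integral_add_adjacent_intervals (hi 0 x) (hi x y)]
  have : 0 ≤ ∫ t in x..y, lastDensity w n t :=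
    intervalIntegral.integral_nonneg hxy fun t ht =>
      lastDensity_nonneg w n (hx.1.trans ht.1) (ht.2.trans hy.2)
  linarith

lemma le_lastDensity_of_alternating (w : ℕ → Bool) (n : ℕ)
    (hw : ∀ j, w (n + 1 + j) = decide (j % 2 = 1)) (j : ℕ) {x : ℝ} (h0 : 0 ≤ x) (h1 : x ≤ 1) :
    (2 / Real.pi) ^ (j + 1) * descentProb w (n + 2) *
      (if j % 2 = 0 then Real.cos (Real.pi / 2 * x) else Real.sin (Real.pi / 2 * x)) ≤
      lastDensity w (n + 2 + j) x := by
  have hpi := Real.pi_pos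
  induction j generalizing x with
  | zero =>
    have e : w (n + 1 + 1) = true := by rw [hw]; rfl
    have e' : w (n + 1) = false := by simpa using hw 0
    have h := mul_integral_le_of_monotoneOn (continuous_lastDensity w (n + 1))
      (monotoneOn_lastDensity w n e') h0 h1
    rw [integral_lastDensity] at h
    simp only [zero_add, pow_one, Nat.zero_mod, if_true, lastDensity, e]
    refine le_trans ?_ h
    have hcos : Real.cos (Real.pi / 2 * x) ≤ Real.pi / 2 * (1 - x) := by
      rw [← Real.sin_pi_div_two_sub]
      refine (Real.sin_le ?_).trans (by linarith)
      nlinarith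
    have hP := (descentProb_pos w (n + 1)).le
    calc 2 / Real.pi * descentProb w (n + 2) * Real.cos (Real.pi / 2 * x)
        ≤ 2 / Real.pi * descentProb w (n + 2) * (Real.pi / 2 * (1 - x)) := by gcongr
      _ = _ := by field_simp
  | succ j ih =>
    have e : w (n + 1 + (j + 1 + 1)) = decide ((j + 1 + 1) % 2 = 1) := hw _
    have e2 : n + 2 + (j + 1) = (n + 2 + j) + 1 := by ring
    have e3 : n + 1 + (j + 1 + 1) = n + 2 + j + 1 := by ring
    rw [e3] at e
    rw [e2, lastDensity, e]
    have hi := fun a b => (continuous_lastDensity w (n + 2 + j)).intervalIntegrable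
      (μ := MeasureTheory.volume) a b
    set c := (2 / Real.pi) ^ (j + 1) * descentProb w (n + 2) with hcdef
    have hc' : (2 / Real.pi) ^ (j + 1 + 1) * descentProb w (n + 2) = c * (2 / Real.pi) := by
      rw [hcdef]; ring
    rw [hc', mul_assoc]
    rcases Nat.mod_two_eq_zero_or_one j with hj | hj
    · have e4 : (j + 1) % 2 = 1 := by omega
      have e5 : (j + 1 + 1) % 2 = 0 := by omega
      simp only [hj, e4, e5, if_true, zero_ne_one, one_ne_zero, decide_false, Bool.false_eq_true,
        if_false] at ih ⊢
      rw [← integral_cos_pi_div_two, ← intervalIntegral.integral_const_mul]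
      exact intervalIntegral.integral_mono_on h0
        (Continuous.intervalIntegrable (by fun_prop) _ _) (hi _ _)
        fun t ht => ih ht.1 (ht.2.trans h1)
    · have e4 : (j + 1) % 2 = 0 := by omega
      have e5 : (j + 1 + 1) % 2 = 1 := by omega
      simp only [hj, e4, e5, if_true, one_ne_zero, decide_true,
        if_false] at ih ⊢
      rw [← integral_sin_pi_div_two, ← intervalIntegral.integral_const_mul]
      exact intervalIntegral.integral_mono_on h1
        (Continuous.intervalIntegrable (by fun_prop) _ _) (hi _ _)
        fun t ht => ih (h0.trans ht.1) ht.2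

/-- Appending `m` alternating letters multiplies the probability by at least `(2 / π) ^ m`, up to
a factor linear in the size. -/
lemma le_descentProb_of_alternating (w : ℕ → Bool) (n : ℕ)
    (hw : ∀ j, w (n + 1 + j) = decide (j % 2 = 1)) (m : ℕ) :
    (2 / Real.pi) ^ m * descentProb w (n + 1) ≤ (n + 2) * descentProb w (n + 1 + m) := by
  have hpi := Real.pi_pos
  have hle : 2 / Real.pi ≤ 1 := by
    rw [div_le_one hpi]
    exact Real.two_le_pi
  have hstep := descentProb_le_mul w n
  have hP1 := descentProb_pos w n
  have hP2 := descentProb_pos w (n + 1)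
  suffices h : (2 / Real.pi) ^ m * descentProb w (n + 2) ≤ descentProb w (n + 1 + m) by
    calc (2 / Real.pi) ^ m * descentProb w (n + 1)
        ≤ (2 / Real.pi) ^ m * ((n + 2) * descentProb w (n + 2)) := by gcongr
      _ = (n + 2) * ((2 / Real.pi) ^ m * descentProb w (n + 2)) := by ring
      _ ≤ _ := by gcongr
  match m with
  | 0 => simpa using descentProb_succ_le w n
  | 1 => exact mul_le_of_le_one_left hP2.le (by simpa using hle)
  | j + 2 =>
    have e : n + 1 + (j + 2) = n + 2 + j + 1 := by ring
    rw [e, ← integral_lastDensity w (n + 2 + j)]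
    calc (2 / Real.pi) ^ (j + 2) * descentProb w (n + 2)
        = ∫ x in (0 : ℝ)..1, (2 / Real.pi) ^ (j + 1) * descentProb w (n + 2) *
      (if j % 2 = 0 then Real.cos (Real.pi / 2 * x) else Real.sin (Real.pi / 2 * x)) := by
          rw [intervalIntegral.integral_const_mul]
          split_ifs
          · rw [integral_cos_pi_div_two, mul_one, Real.sin_pi_div_two]
            ring
          · rw [integral_sin_pi_div_two, mul_zero, Real.cos_zero]
            ring
      _ ≤ _ := by
          refine intervalIntegral.integral_mono_on zero_le_one
            (Continuous.intervalIntegrable ?_ _ _)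
            ((continuous_lastDensity w _).intervalIntegrable _ _)
            fun t ht => le_lastDensity_of_alternating w n hw j ht.1 ht.2
          split_ifs <;> fun_prop

lemma log_succ_le_two_mul_sqrt (n : ℕ) : Real.log ((n : ℝ) + 1) ≤ 2 * √(n : ℝ) := by
  have h1 : Real.log ((n : ℝ) + 1) = 2 * Real.log (√((n : ℝ) + 1)) := by
    rw [Real.log_sqrt (by positivity)]
    ring
  have h2 := Real.log_le_sub_one_of_pos (Real.sqrt_pos.2 (by positivity : (0 : ℝ) < (n : ℝ) + 1))
  have h3 : √((n : ℝ) + 1) ≤ √(n : ℝ) + 1 := by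
    rw [Real.sqrt_le_left (by positivity)]
    nlinarith [Real.sq_sqrt (Nat.cast_nonneg (α := ℝ) n), Real.sqrt_nonneg (n : ℝ)]
  linarith

lemma exp_neg_le_exp_neg_add {x y δ : ℝ} (hy : 0 ≤ y) (hδ : 0 ≤ δ) (h : x ≤ y + δ) :
    Real.exp (-y) ≤ Real.exp (-x) + δ := by
  have h1 : Real.exp (-x) = Real.exp (-y) * Real.exp (y - x) := by
    rw [← Real.exp_add]
    ring_nf
  have h2 := Real.add_one_le_exp (y - x)
  have h3 : Real.exp (-y) ≤ 1 := Real.exp_le_one_iff.2 (by linarith)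
  have h4 := Real.exp_pos (-y)
  have h5 : Real.exp (-y) * (1 - δ) ≤ Real.exp (-y) * Real.exp (y - x) := by
    gcongr
    linarith
  nlinarith

/-- Minus the logarithm of the descent probability. -/
noncomputable def negLogProb (w : ℕ → Bool) (n : ℕ) : ℝ := -Real.log (descentProb w n)

lemma negLogProb_congr {w w' : ℕ → Bool} {n : ℕ} (h : ∀ i < n, w i = w' i) :
    negLogProb w n = negLogProb w' n := by
  rw [negLogProb, negLogProb, descentProb_congr h]

lemma negLogProb_le_succ (w : ℕ → Bool) (n : ℕ) : negLogProb w (n + 1) ≤ negLogProb w (n + 2) :=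
  neg_le_neg (Real.log_le_log (descentProb_pos w (n + 1)) (descentProb_succ_le w n))

lemma negLogProb_succ_le (w : ℕ → Bool) (n : ℕ) :
    negLogProb w (n + 2) ≤ negLogProb w (n + 1) + Real.log (n + 2) := by
  have h := Real.log_le_log (descentProb_pos w n) (descentProb_le_mul w n)
  rw [Real.log_mul (by positivity) (descentProb_pos w (n + 1)).ne'] at h
  simp only [negLogProb]
  linarith

lemma negLogProb_nonneg (w : ℕ → Bool) (n : ℕ) : 0 ≤ negLogProb w (n + 1) := by
  induction n with
  | zero => simp [negLogProb, descentProb_one]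
  | succ n ih => exact ih.trans (negLogProb_le_succ w n)

lemma negLogProb_mono (w : ℕ → Bool) (n m : ℕ) :
    negLogProb w (n + 1) ≤ negLogProb w (n + 1 + m) := by
  induction m with
  | zero => simp
  | succ m ih =>
    refine ih.trans ?_
    have e : n + 1 + m = n + m + 1 := by ring
    have e' : n + 1 + (m + 1) = n + m + 2 := by ring
    rw [e, e']
    exact negLogProb_le_succ w (n + m)

lemma negLogProb_le_mul_log (w : ℕ → Bool) (n : ℕ) :
    negLogProb w (n + 1) ≤ (n + 1) * Real.log (n + 1) := by
  induction n with
  | zero => simp [negLogProb, descentProb_one]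
  | succ n ih =>
    have h := negLogProb_succ_le w n
    have hl : Real.log ((n : ℝ) + 1) ≤ Real.log ((n : ℝ) + 2) :=
      Real.log_le_log (by positivity) (by linarith)
    push_cast
    rw [show (n : ℝ) + 1 + 1 = n + 2 by ring]
    nlinarith

/-- The exponential decay rate of the descent probability. -/
noncomputable def decayRate (w : ℕ → Bool) (n : ℕ) : ℝ := negLogProb w n / n

lemma decayRate_congr {w w' : ℕ → Bool} {n : ℕ} (h : ∀ i < n, w i = w' i) :
    decayRate w n = decayRate w' n := by
  rw [decayRate, decayRate, negLogProb_congr h]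

lemma decayRate_nonneg (w : ℕ → Bool) (n : ℕ) : 0 ≤ decayRate w (n + 1) :=
  div_nonneg (negLogProb_nonneg w n) (by positivity)

lemma two_div_sqrt_eq (n : ℕ) : 2 / √((n : ℝ) + 1) = 2 * √((n : ℝ) + 1) / (n + 1) := by
  rw [div_eq_div_iff (by positivity) (by positivity), mul_assoc,
    Real.mul_self_sqrt (by positivity)]

lemma abs_decayRate_sub_le (w : ℕ → Bool) (n : ℕ) :
    |decayRate w (n + 2) - decayRate w (n + 1)| ≤ 2 / √((n : ℝ) + 1) := by
  have h1 := negLogProb_le_succ w n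
  have h2 := negLogProb_succ_le w n
  have h3 := negLogProb_le_mul_log w n
  have h4 := log_succ_le_two_mul_sqrt (n + 1)
  have h5 := negLogProb_nonneg w n
  have h6 : Real.log ((n : ℝ) + 1) ≤ Real.log ((n : ℝ) + 2) :=
    Real.log_le_log (by positivity) (by linarith)
  push_cast at h4
  rw [show (n : ℝ) + 1 + 1 = n + 2 by ring] at h4
  have h7 : 0 ≤ √((n : ℝ) + 1) := Real.sqrt_nonneg _
  rw [two_div_sqrt_eq, decayRate, decayRate]
  push_cast
  have hn : (0 : ℝ) ≤ n := Nat.cast_nonneg n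
  have e : negLogProb w (n + 2) / ((n : ℝ) + 2) - negLogProb w (n + 1) / ((n : ℝ) + 1) =
      (negLogProb w (n + 2) - negLogProb w (n + 1) - negLogProb w (n + 1) / (n + 1)) / (n + 2) := by
    field_simp
    ring
  have h8 : negLogProb w (n + 1) / ((n : ℝ) + 1) ≤ 2 * √((n : ℝ) + 1) := by
    rw [div_le_iff₀ (by positivity)]
    nlinarith
  have h9 : 0 ≤ negLogProb w (n + 1) / ((n : ℝ) + 1) := by positivity
  rw [e, abs_div, abs_of_pos (by positivity : (0 : ℝ) < n + 2)]
  gcongr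
  · rw [abs_le]
    constructor <;> linarith
  · norm_num

lemma two_div_sqrt_antitone {m n : ℕ} (h : n ≤ m) :
    2 / √((m : ℝ) + 1) ≤ 2 / √((n : ℝ) + 1) := by
  have : (n : ℝ) ≤ m := by exact_mod_cast h
  gcongr

lemma negLogProb_add_log_factorial_le (w : ℕ → Bool) (n m : ℕ) (hw : ∀ i, n < i → w i = false) :
    negLogProb w (n + 1) + Real.log (m.factorial : ℝ) ≤ negLogProb w (n + 1 + m) := by
  have e : n + 1 + m = n + m + 1 := by ring
  have h := Real.log_le_log (e ▸ descentProb_pos w (n + m)) (descentProb_le_div_factorial w n m hw)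
  rw [Real.log_div (descentProb_pos w n).ne' (by positivity)] at h
  simp only [negLogProb]
  linarith

lemma mul_sub_exp_le_log_factorial (m : ℕ) (x : ℝ) :
    m * x - Real.exp x ≤ Real.log (m.factorial : ℝ) := by
  have h := Real.pow_div_factorial_le_exp (Real.exp x) (Real.exp_pos x).le m
  have h' := Real.log_le_log (by positivity) h
  rw [Real.log_exp, Real.log_div (by positivity) (by positivity), Real.log_pow, Real.log_exp] at h'
  linarith

lemma min_sub_le_decayRate (w : ℕ → Bool) (n m : ℕ) (hw : ∀ i, n < i → w i = false) :
    min (decayRate w (n + 1)) (Real.log ((n : ℝ) + 1) / 2) ≤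
      decayRate w (n + 1 + m) + 1 / √((n : ℝ) + 1) := by
  set x := min (decayRate w (n + 1)) (Real.log ((n : ℝ) + 1) / 2) with hx
  have h1 := negLogProb_add_log_factorial_le w n m hw
  have h2 := mul_sub_exp_le_log_factorial m x
  have h3 : Real.exp x ≤ √((n : ℝ) + 1) := by
    refine (Real.exp_le_exp.2 (min_le_right _ _)).trans ?_
    rw [← Real.log_sqrt (by positivity), Real.exp_log (by positivity)]
  have h4 : (n + 1) * x ≤ negLogProb w (n + 1) := by
    have := min_le_left (decayRate w (n + 1)) (Real.log ((n : ℝ) + 1) / 2)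
    rw [← hx, decayRate, le_div_iff₀ (by positivity)] at this
    push_cast at this
    linarith
  have hs : 1 / √((n : ℝ) + 1) * (n + 1) = √((n : ℝ) + 1) := by
    rw [one_div_mul_eq_div, Real.div_sqrt]
  have hs' : 0 ≤ 1 / √((n : ℝ) + 1) := by positivity
  have hm : (0 : ℝ) ≤ m := Nat.cast_nonneg m
  have hd : decayRate w (n + 1 + m) * (n + 1 + m) = negLogProb w (n + 1 + m) := by
    rw [decayRate]
    push_cast
    field_simp
  have hpos : (0 : ℝ) < n + 1 + m := by positivity
  refine le_of_mul_le_mul_right ?_ hpos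
  rw [add_mul, hd]
  nlinarith

lemma negLogProb_le_of_alternating (w : ℕ → Bool) (n : ℕ)
    (hw : ∀ j, w (n + 1 + j) = decide (j % 2 = 1)) (m : ℕ) :
    negLogProb w (n + 1 + m) ≤
      negLogProb w (n + 1) + m * Real.log (Real.pi / 2) + Real.log (n + 2) := by
  have hpi := Real.pi_pos
  have h := Real.log_le_log (mul_pos (by positivity) (descentProb_pos w n))
    (le_descentProb_of_alternating w n hw m)
  have e : n + 1 + m = n + m + 1 := by ring
  have hp : 0 < descentProb w (n + 1 + m) := e ▸ descentProb_pos w (n + m)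
  rw [Real.log_mul (by positivity) (descentProb_pos w n).ne',
    Real.log_mul (by positivity) hp.ne', Real.log_pow, ← inv_div, Real.log_inv] at h
  simp only [negLogProb]
  linarith

lemma exp_neg_log_div_two (n : ℕ) :
    Real.exp (-(Real.log ((n : ℝ) + 1) / 2)) = 1 / √((n : ℝ) + 1) := by
  rw [Real.exp_neg, ← Real.log_sqrt (by positivity), Real.exp_log (by positivity), one_div]

/-- The normalized growth rate of the number of permutations with descent pattern `w`. -/
noncomputable def growth (w : ℕ → Bool) (n : ℕ) : ℝ :=
  ((dCount w n : ℝ) / (Nat.factorial n : ℝ)) ^ (1 / (n : ℝ))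

lemma growth_congr {w w' : ℕ → Bool} {n : ℕ} (h : ∀ i < n, w i = w' i) :
    growth w n = growth w' n := by
  rw [growth, growth, dCount_congr h]

lemma growth_eq_exp (w : ℕ → Bool) (n : ℕ) :
    growth w (n + 1) = Real.exp (-decayRate w (n + 1)) := by
  have h := descentProb_pos w n
  rw [descentProb] at h
  rw [growth, Real.rpow_def_of_pos h, decayRate, negLogProb, descentProb]
  congr 1
  ring

/-- Words can be extended so that the growth rate falls to any prescribed positive level. -/
lemma exists_lower (w : ℕ → Bool) (n : ℕ) {T : ℝ} (hT : 0 ≤ T)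
    (hle : decayRate w (n + 1) ≤ T) :
    ∃ w' : ℕ → Bool, ∃ n', n < n' ∧ (∀ i < n + 1, w' i = w i) ∧
      |growth w' (n' + 1) - Real.exp (-T)| ≤ 2 / √((n : ℝ) + 1) ∧
      ∀ m, n ≤ m → m ≤ n' →
        Real.exp (-T) - 2 / √((n : ℝ) + 1) ≤ growth w' (m + 1) ∧
        growth w' (m + 1) ≤ growth w (n + 1) + 2 / √((n : ℝ) + 1) := by
  classical
  set w' : ℕ → Bool := fun i => if i < n + 1 then w i else false with hw'
  have hagree : ∀ i < n + 1, w' i = w i := fun i hi => by simp only [hw', if_pos hi]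
  have hw : ∀ i, n < i → w' i = false := fun i hi => by
    simp only [hw', if_neg (by omega : ¬ i < n + 1)]
  have hn0 : decayRate w' (n + 1) = decayRate w (n + 1) := decayRate_congr hagree
  have hs : 0 ≤ 1 / √((n : ℝ) + 1) := by positivity
  have htwo : 2 / √((n : ℝ) + 1) = 1 / √((n : ℝ) + 1) + 1 / √((n : ℝ) + 1) := by ring
  have hex : ∃ m, T < decayRate w' (n + 1 + m) := by
    obtain ⟨m, hm⟩ := exists_nat_gt ((n + 1) * T + Real.exp (T + 1))
    refine ⟨m, ?_⟩
    have h1 := negLogProb_add_log_factorial_le w' n m hw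
    have h2 := mul_sub_exp_le_log_factorial m (T + 1)
    have h3 := negLogProb_nonneg w' n
    rw [decayRate, lt_div_iff₀ (by positivity)]
    push_cast
    nlinarith
  obtain ⟨m, hm⟩ : ∃ m, Nat.find hex = m + 1 := Nat.exists_eq_succ_of_ne_zero fun h0 => by
    have := Nat.find_spec hex
    rw [h0, add_zero, hn0] at this
    linarith
  have hlast : T < decayRate w' (n + m + 2) := by
    have := Nat.find_spec hex
    rw [hm] at this
    rwa [show n + 1 + (m + 1) = n + m + 2 by ring] at this
  have hbefore : ∀ k ≤ m, decayRate w' (n + k + 1) ≤ T := fun k hk => by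
    have := Nat.find_min hex (m := k) (by omega)
    rw [show n + 1 + k = n + k + 1 by ring] at this
    exact not_lt.1 this
  have hstep := abs_le.1 (abs_decayRate_sub_le w' (n + m))
  have hanti := two_div_sqrt_antitone (Nat.le_add_right n m)
  have hub : ∀ k, n ≤ k → k ≤ n + m + 1 → decayRate w' (k + 1) ≤ T + 2 / √((n : ℝ) + 1) := by
    intro k hk hk'
    rcases Nat.lt_or_ge k (n + m + 1) with h | h
    · obtain ⟨j, rfl⟩ := Nat.exists_eq_add_of_le hk
      have := hbefore j (by omega)
      linarith
    · obtain rfl : k = n + m + 1 := by omega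
      have := hbefore m le_rfl
      linarith [hstep.2]
  have hlb : ∀ k, n ≤ k → k ≤ n + m + 1 →
      Real.exp (-T) - 2 / √((n : ℝ) + 1) ≤ growth w' (k + 1) := by
    intro k hk hk'
    rw [growth_eq_exp]
    linarith [exp_neg_le_exp_neg_add hT (by linarith) (hub k hk hk')]
  refine ⟨w', n + m + 1, by omega, hagree, ?_, fun k hk hk' => ⟨hlb k hk hk', ?_⟩⟩
  · rw [abs_le]
    refine ⟨by linarith [hlb (n + m + 1) (by omega) le_rfl], ?_⟩
    rw [growth_eq_exp]
    have : Real.exp (-decayRate w' (n + m + 1 + 1)) ≤ Real.exp (-T) :=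
      Real.exp_le_exp.2 (neg_le_neg hlast.le)
    linarith
  · obtain ⟨j, rfl⟩ := Nat.exists_eq_add_of_le hk
    have h := min_sub_le_decayRate w' n j hw
    rw [hn0, show n + 1 + j = n + j + 1 by ring] at h
    have h1 := exp_neg_le_exp_neg_add (decayRate_nonneg w' (n + j)) hs h
    rw [growth_eq_exp, growth_eq_exp]
    have h2 : Real.exp (-min (decayRate w (n + 1)) (Real.log ((n : ℝ) + 1) / 2)) ≤
        Real.exp (-decayRate w (n + 1)) + 1 / √((n : ℝ) + 1) := by
      rw [← exp_neg_log_div_two]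
      rcases min_choice (decayRate w (n + 1)) (Real.log ((n : ℝ) + 1) / 2) with h | h <;> rw [h]
      · linarith [Real.exp_pos (-(Real.log ((n : ℝ) + 1) / 2))]
      · linarith [Real.exp_pos (-decayRate w (n + 1))]
    linarith

/-- Words can be extended so that the growth rate rises to any level below `2 / π`. -/
lemma exists_raise (w : ℕ → Bool) (n : ℕ) {T : ℝ} (hT : Real.log (Real.pi / 2) < T)
    (hlt : T < decayRate w (n + 1)) :
    ∃ w' : ℕ → Bool, ∃ n', n < n' ∧ (∀ i < n + 1, w' i = w i) ∧
      |growth w' (n' + 1) - Real.exp (-T)| ≤ 2 / √((n : ℝ) + 1) ∧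
      ∀ m, n ≤ m → m ≤ n' →
        growth w (n + 1) - 2 / √((n : ℝ) + 1) ≤ growth w' (m + 1) ∧
        growth w' (m + 1) ≤ Real.exp (-T) + 2 / √((n : ℝ) + 1) := by
  classical
  set w' : ℕ → Bool := fun i => if i < n + 1 then w i else decide ((i - (n + 1)) % 2 = 1) with hw'
  have hagree : ∀ i < n + 1, w' i = w i := fun i hi => by simp only [hw', if_pos hi]
  have hw : ∀ j, w' (n + 1 + j) = decide (j % 2 = 1) := fun j => by
    simp only [hw', if_neg (by omega : ¬ n + 1 + j < n + 1), Nat.add_sub_cancel_left]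
  have hn0 : decayRate w' (n + 1) = decayRate w (n + 1) := decayRate_congr hagree
  have hT0 : 0 ≤ T := by
    have : 0 ≤ Real.log (Real.pi / 2) := Real.log_nonneg (by linarith [Real.two_le_pi])
    linarith
  have hs : 0 ≤ 2 / √((n : ℝ) + 1) := by positivity
  have hlog : Real.log ((n : ℝ) + 2) ≤ 2 / √((n : ℝ) + 1) * (n + 1) := by
    have := log_succ_le_two_mul_sqrt (n + 1)
    push_cast at this
    rw [two_div_sqrt_eq, div_mul_cancel₀ _ (by positivity)]
    rwa [show (n : ℝ) + 1 + 1 = n + 2 by ring] at this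
  have hex : ∃ m, decayRate w' (n + 1 + m) ≤ T := by
    obtain ⟨m, hm⟩ := exists_nat_gt ((negLogProb w' (n + 1) + Real.log (n + 2)) /
      (T - Real.log (Real.pi / 2)))
    rw [div_lt_iff₀ (by linarith)] at hm
    refine ⟨m, ?_⟩
    have h1 := negLogProb_le_of_alternating w' n hw m
    rw [decayRate, div_le_iff₀ (by positivity)]
    push_cast
    have : 0 ≤ T * (n + 1) := by positivity
    linarith
  obtain ⟨m, hm⟩ : ∃ m, Nat.find hex = m + 1 := Nat.exists_eq_succ_of_ne_zero fun h0 => by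
    have := Nat.find_spec hex
    rw [h0, add_zero, hn0] at this
    linarith
  have hlast : decayRate w' (n + m + 2) ≤ T := by
    have := Nat.find_spec hex
    rw [hm] at this
    rwa [show n + 1 + (m + 1) = n + m + 2 by ring] at this
  have hbefore : ∀ k ≤ m, T < decayRate w' (n + k + 1) := fun k hk => by
    have := Nat.find_min hex (m := k) (by omega)
    rw [show n + 1 + k = n + k + 1 by ring] at this
    exact not_le.1 this
  have hstep := abs_le.1 (abs_decayRate_sub_le w' (n + m))
  have hanti := two_div_sqrt_antitone (Nat.le_add_right n m)
  have hlb : ∀ k, n ≤ k → k ≤ n + m + 1 → T ≤ decayRate w' (k + 1) + 2 / √((n : ℝ) + 1) := by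
    intro k hk hk'
    rcases Nat.lt_or_ge k (n + m + 1) with h | h
    · obtain ⟨j, rfl⟩ := Nat.exists_eq_add_of_le hk
      have := hbefore j (by omega)
      linarith
    · obtain rfl : k = n + m + 1 := by omega
      have := hbefore m le_rfl
      linarith [hstep.1]
  have hub : ∀ k, n ≤ k → k ≤ n + m + 1 →
      growth w' (k + 1) ≤ Real.exp (-T) + 2 / √((n : ℝ) + 1) := by
    intro k hk hk'
    rw [growth_eq_exp]
    exact exp_neg_le_exp_neg_add (decayRate_nonneg _ _) hs (hlb k hk hk')
  refine ⟨w', n + m + 1, by omega, hagree, ?_, fun k hk hk' => ⟨?_, hub k hk hk'⟩⟩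
  · rw [abs_le]
    refine ⟨?_, by linarith [hub (n + m + 1) (by omega) le_rfl]⟩
    rw [growth_eq_exp]
    have : Real.exp (-T) ≤ Real.exp (-decayRate w' (n + m + 1 + 1)) :=
      Real.exp_le_exp.2 (neg_le_neg hlast)
    linarith
  · obtain ⟨j, rfl⟩ := Nat.exists_eq_add_of_le hk
    have h1 := negLogProb_le_of_alternating w' n hw j
    have h2 : decayRate w' (n + j + 1) ≤ decayRate w (n + 1) + 2 / √((n : ℝ) + 1) := by
      have hd : decayRate w (n + 1) * (n + 1) = negLogProb w' (n + 1) := by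
        rw [← hn0, decayRate]
        push_cast
        field_simp
      have hj : (0 : ℝ) ≤ j := Nat.cast_nonneg j
      rw [decayRate, div_le_iff₀ (by positivity), ← show n + 1 + j = n + j + 1 by ring]
      push_cast
      have h3 : (j : ℝ) * Real.log (Real.pi / 2) ≤ j * decayRate w (n + 1) := by
        gcongr
        linarith
      nlinarith [mul_nonneg hs hj]
    have h3 := exp_neg_le_exp_neg_add (decayRate_nonneg w n) hs h2
    rw [growth_eq_exp, growth_eq_exp]
    linarith

lemma exists_move (w : ℕ → Bool) (n : ℕ) {t : ℝ} (ht0 : 0 < t) (ht1 : t < 2 / Real.pi) :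
    ∃ w' : ℕ → Bool, ∃ n', n < n' ∧ (∀ i < n + 1, w' i = w i) ∧
      |growth w' (n' + 1) - t| ≤ 2 / √((n : ℝ) + 1) ∧
      ∀ m, n ≤ m → m ≤ n' →
        min (growth w (n + 1)) t - 2 / √((n : ℝ) + 1) ≤ growth w' (m + 1) ∧
        growth w' (m + 1) ≤ max (growth w (n + 1)) t + 2 / √((n : ℝ) + 1) := by
  have hT : Real.log (Real.pi / 2) < -Real.log t := by
    rw [← inv_div, Real.log_inv]
    exact neg_lt_neg (Real.log_lt_log ht0 ht1)
  have hpos : 0 ≤ Real.log (Real.pi / 2) := Real.log_nonneg (by linarith [Real.two_le_pi])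
  have he : Real.exp (-(-Real.log t)) = t := by rw [neg_neg, Real.exp_log ht0]
  have hmin := min_le_right (growth w (n + 1)) t
  have hmin' := min_le_left (growth w (n + 1)) t
  have hmax := le_max_right (growth w (n + 1)) t
  have hmax' := le_max_left (growth w (n + 1)) t
  rcases le_or_gt (decayRate w (n + 1)) (-Real.log t) with h | h
  · obtain ⟨w', n', h1, h2, h3, h4⟩ := exists_lower w n (by linarith) h
    rw [he] at h3 h4
    exact ⟨w', n', h1, h2, h3, fun m hm hm' =>
      ⟨by linarith [(h4 m hm hm').1], by linarith [(h4 m hm hm').2]⟩⟩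
  · obtain ⟨w', n', h1, h2, h3, h4⟩ := exists_raise w n hT h
    rw [he] at h3 h4
    exact ⟨w', n', h1, h2, h3, fun m hm hm' =>
      ⟨by linarith [(h4 m hm hm').1], by linarith [(h4 m hm hm').2]⟩⟩

lemma exists_word_tracking (t : ℕ → ℝ) (ht0 : ∀ k, 0 < t k) (ht1 : ∀ k, t k < 2 / Real.pi) :
    ∃ W : ℕ → Bool, ∃ N : ℕ → ℕ, StrictMono N ∧ ∀ k,
      |growth W (N (k + 1) + 1) - t k| ≤ 2 / √((k : ℝ) + 1) ∧
      ∀ m, N (k + 1) ≤ m → m ≤ N (k + 2) →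
        min (t k) (t (k + 1)) - 4 / √((k : ℝ) + 1) ≤ growth W (m + 1) ∧
        growth W (m + 1) ≤ max (t k) (t (k + 1)) + 4 / √((k : ℝ) + 1) := by
  choose F G hlt hagree hend hmid using fun (w : ℕ → Bool) (n k : ℕ) =>
    exists_move w n (ht0 k) (ht1 k)
  let st : ℕ → (ℕ → Bool) × ℕ := fun k => Nat.rec (fun _ => false, 0)
    (fun k s => (F s.1 s.2 k, G s.1 s.2 k)) k
  have hN : StrictMono fun k => (st k).2 := strictMono_nat_of_lt_succ fun k => hlt _ _ _
  have hkN : ∀ k, k ≤ (st k).2 := fun k => hN.le_apply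
  have hstab : ∀ k j i, i < (st k).2 + 1 → (st (k + j)).1 i = (st k).1 i := by
    intro k j i hi
    induction j with
    | zero => rfl
    | succ j ih =>
      rw [← ih]
      have h : (st k).2 ≤ (st (k + j)).2 := hN.monotone (Nat.le_add_right k j)
      exact hagree _ _ _ i (hi.trans_le (Nat.succ_le_succ h))
  have hW : ∀ k i, i < (st k).2 + 1 → (st i).1 i = (st k).1 i := by
    intro k i hi
    rcases Nat.le_total i k with h | h
    · obtain ⟨j, rfl⟩ := Nat.exists_eq_add_of_le h
      exact (hstab i j i (Nat.lt_succ_of_le (hkN i))).symm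
    · obtain ⟨j, rfl⟩ := Nat.exists_eq_add_of_le h
      exact hstab k j _ hi
  have hgrowth : ∀ k m, m ≤ (st k).2 →
      growth (fun i => (st i).1 i) (m + 1) = growth (st k).1 (m + 1) := fun k m hm =>
    growth_congr fun i hi => hW k i (by omega)
  have hend' : ∀ k, |growth (fun i => (st i).1 i) ((st (k + 1)).2 + 1) - t k| ≤
      2 / √((k : ℝ) + 1) := fun k => by
    rw [hgrowth (k + 1) _ le_rfl]
    exact (hend _ _ k).trans (two_div_sqrt_antitone (hkN k))
  refine ⟨fun i => (st i).1 i, fun k => (st k).2, hN, fun k => ⟨hend' k, fun m hm hm' => ?_⟩⟩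
  have h1 := abs_le.1 (hend' k)
  have h2 := hmid (st (k + 1)).1 (st (k + 1)).2 (k + 1) m hm hm'
  rw [← hgrowth (k + 1) _ le_rfl] at h2
  have h3 : growth (fun i => (st i).1 i) (m + 1) = growth (F (st (k + 1)).1 (st (k + 1)).2 (k + 1))
    (m + 1) := hgrowth (k + 2) m hm'
  have h4 := two_div_sqrt_antitone ((Nat.le_succ k).trans (hkN (k + 1)))
  have h5 : 4 / √((k : ℝ) + 1) = 2 / √((k : ℝ) + 1) + 2 / √((k : ℝ) + 1) := by ring
  rw [h3]
  have h6 : min (t k) (t (k + 1)) - 2 / √((k : ℝ) + 1) ≤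
      min (growth (fun i => (st i).1 i) ((st (k + 1)).2 + 1)) (t (k + 1)) := by
    have h7 : 0 ≤ 2 / √((k : ℝ) + 1) := by positivity
    refine le_min ?_ ?_
    · linarith [min_le_left (t k) (t (k + 1))]
    · linarith [min_le_right (t k) (t (k + 1))]
  have h8 : max (growth (fun i => (st i).1 i) ((st (k + 1)).2 + 1)) (t (k + 1)) ≤
      max (t k) (t (k + 1)) + 2 / √((k : ℝ) + 1) := by
    have h7 : 0 ≤ 2 / √((k : ℝ) + 1) := by positivity
    refine max_le ?_ ?_
    · linarith [le_max_left (t k) (t (k + 1))]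
    · linarith [le_max_right (t k) (t (k + 1))]
  constructor <;> linarith [h2.1, h2.2]

lemma StrictMono.exists_between_succ {N : ℕ → ℕ} (hN : StrictMono N) {K m : ℕ} (h : N K ≤ m) :
    ∃ k, K ≤ k ∧ N k ≤ m ∧ m ≤ N (k + 1) := by
  induction m, h using Nat.le_induction with
  | base => exact ⟨K, le_rfl, le_rfl, hN.monotone (Nat.le_succ K)⟩
  | succ m _ ih =>
    obtain ⟨k, h1, h2, h3⟩ := ih
    rcases Nat.lt_or_ge m (N (k + 1)) with h | h
    · exact ⟨k, h1, by omega, h⟩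
    · have := hN (Nat.lt_succ_self (k + 1))
      simp only [Nat.succ_eq_add_one] at this
      exact ⟨k + 1, by omega, by omega, by omega⟩

lemma liminf_eq_and_limsup_eq {a : ℕ → ℝ} {L L' : ℝ}
    (hev : ∀ ε > 0, ∀ᶠ n in atTop, L - ε ≤ a n ∧ a n ≤ L' + ε)
    (hlow : ∀ ε > 0, ∃ᶠ n in atTop, a n ≤ L + ε)
    (hupp : ∀ ε > 0, ∃ᶠ n in atTop, L' - ε ≤ a n) :
    liminf a atTop = L ∧ limsup a atTop = L' := by
  have hb : IsBoundedUnder (· ≥ ·) atTop a :=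
    isBoundedUnder_of_eventually_ge ((hev 1 one_pos).mono fun _ h => h.1)
  have hb' : IsBoundedUnder (· ≤ ·) atTop a :=
    isBoundedUnder_of_eventually_le ((hev 1 one_pos).mono fun _ h => h.2)
  constructor
  · refine le_antisymm (le_of_forall_pos_le_add fun ε hε => ?_)
      (le_of_forall_sub_le fun ε hε => ?_)
    · exact liminf_le_of_frequently_le (hlow ε hε) hb
    · exact le_liminf_of_le hb'.isCoboundedUnder_ge ((hev ε hε).mono fun _ h => h.1)
  · refine le_antisymm (le_of_forall_pos_le_add fun ε hε => ?_)
      (le_of_forall_sub_le fun ε hε => ?_)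
    · exact limsup_le_of_le hb.isCoboundedUnder_le ((hev ε hε).mono fun _ h => h.2)
    · exact le_limsup_of_frequently_le (hupp ε hε) hb'

theorem stmt1 (L L' : ℝ) (hL0 : 0 ≤ L) (hLL' : L ≤ L') (hL1 : L' ≤ 2 / Real.pi) :
    ∃ w : ℕ → Bool,
      liminf (fun n : ℕ => ((dCount w n : ℝ) / (Nat.factorial n : ℝ)) ^ (1 / (n : ℝ)))
        atTop = L ∧
      limsup (fun n : ℕ => ((dCount w n : ℝ) / (Nat.factorial n : ℝ)) ^ (1 / (n : ℝ)))
        atTop = L' := by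
  have hpi := Real.pi_pos
  have hpi1 : 2 / Real.pi ≤ 1 := by
    rw [div_le_one hpi]
    exact Real.two_le_pi
  set c : ℝ := 1 / Real.pi with hc
  have hc0 : 0 < c := by positivity
  have hc2 : 2 / Real.pi = 2 * c := by rw [hc]; ring
  rw [hc2] at hL1 hpi1
  let X : ℕ → ℝ := fun k => if k % 2 = 0 then L else L'
  let t : ℕ → ℝ := fun k => (1 - 1 / ((k : ℝ) + 2)) * X k + 1 / ((k : ℝ) + 2) * c
  have hX : ∀ k, L ≤ X k ∧ X k ≤ L' := fun k => by
    simp only [X]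
    split_ifs
    exacts [⟨le_rfl, hLL'⟩, ⟨hLL', le_rfl⟩]
  have he0 : ∀ k : ℕ, 0 < 1 / ((k : ℝ) + 2) := fun k => by positivity
  have he1 : ∀ k : ℕ, 1 / ((k : ℝ) + 2) ≤ 1 := fun k => by
    rw [div_le_one (by positivity)]
    linarith [Nat.cast_nonneg (α := ℝ) k]
  have ht0 : ∀ k, 0 < t k := fun k => by
    have h1 : 0 ≤ (1 - 1 / ((k : ℝ) + 2)) * X k :=
      mul_nonneg (by linarith [he1 k]) (by linarith [hX k])
    have h2 := mul_pos (he0 k) hc0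
    simp only [t]
    linarith
  have ht1 : ∀ k, t k < 2 / Real.pi := fun k => by
    have h1 : (1 - 1 / ((k : ℝ) + 2)) * X k ≤ (1 - 1 / ((k : ℝ) + 2)) * (2 * c) :=
      mul_le_mul_of_nonneg_left (by linarith [hX k]) (by linarith [he1 k])
    have h2 := mul_pos (he0 k) hc0
    simp only [t]
    rw [hc2]
    linarith
  have htX : ∀ k, |t k - X k| ≤ 1 / ((k : ℝ) + 2) := fun k => by
    have h1 : t k - X k = 1 / ((k : ℝ) + 2) * (c - X k) := by
      simp only [t]
      ring
    rw [h1, abs_mul, abs_of_pos (he0 k)]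
    refine mul_le_of_le_one_right (he0 k).le (abs_le.2 ⟨?_, ?_⟩) <;> linarith [hX k]
  obtain ⟨W, N, hN, hWN⟩ := exists_word_tracking t ht0 ht1
  have htend : Tendsto (fun k : ℕ => 4 / √((k : ℝ) + 1) + 1 / ((k : ℝ) + 1)) atTop (nhds 0) := by
    have h1 : Tendsto (fun k : ℕ => (k : ℝ) + 1) atTop atTop :=
      tendsto_natCast_atTop_atTop.atTop_add tendsto_const_nhds
    simpa using ((Real.tendsto_sqrt_atTop.comp h1).const_div_atTop 4).add (h1.const_div_atTop 1)
  have hsmall : ∀ ε > 0, ∃ K : ℕ, ∀ k ≥ K, 4 / √((k : ℝ) + 1) + 1 / ((k : ℝ) + 1) ≤ ε :=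
    fun ε hε => eventually_atTop.1 (htend.eventually_le_const hε)
  have hle1 : ∀ k : ℕ, 1 / ((k : ℝ) + 2) ≤ 1 / ((k : ℝ) + 1) := fun k => by
    gcongr
    norm_num
  have hle2 : ∀ k : ℕ, 1 / (((k + 1 : ℕ) : ℝ) + 2) ≤ 1 / ((k : ℝ) + 1) := fun k => by
    gcongr <;> norm_num
  have hnear : ∀ k, |growth W (N (k + 1) + 1) - X k| ≤
      4 / √((k : ℝ) + 1) + 1 / ((k : ℝ) + 1) := fun k => by
    have h1 := abs_sub_le (growth W (N (k + 1) + 1)) (t k) (X k)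
    have h2 : 2 / √((k : ℝ) + 1) ≤ 4 / √((k : ℝ) + 1) := by
      gcongr
      norm_num
    linarith [(hWN k).1, htX k, hle1 k]
  have hfreq : ∀ r < 2, ∀ ε > 0, ∃ᶠ n in atTop, ∃ k, k % 2 = r ∧ |growth W n - X k| ≤ ε := by
    intro r hr ε hε
    rw [frequently_atTop]
    intro M
    obtain ⟨K, hK⟩ := hsmall ε hε
    have h2 := hN.le_apply (x := 2 * (K + M) + r + 1)
    exact ⟨N (2 * (K + M) + r + 1) + 1, by omega, 2 * (K + M) + r, by omega,
      (hnear _).trans (hK _ (by omega))⟩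
  refine ⟨W, liminf_eq_and_limsup_eq (a := growth W) ?_ ?_ ?_⟩
  · intro ε hε
    obtain ⟨K, hK⟩ := hsmall ε hε
    rw [eventually_atTop]
    refine ⟨N (K + 1) + 1, fun n hn => ?_⟩
    obtain ⟨m, rfl⟩ : ∃ m, n = m + 1 := ⟨n - 1, by omega⟩
    obtain ⟨k, hk, hk1, hk2⟩ := hN.exists_between_succ (Nat.le_of_succ_le_succ hn)
    obtain ⟨j, rfl⟩ : ∃ j, k = j + 1 := ⟨k - 1, by omega⟩
    have h1 := (hWN j).2 m hk1 hk2
    have h2 := hK j (by omega)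
    have h3 := abs_le.1 (htX j)
    have h4 := abs_le.1 (htX (j + 1))
    have h5 := hle1 j
    have h6 := hle2 j
    have h7 : L - 1 / ((j : ℝ) + 1) ≤ min (t j) (t (j + 1)) :=
      le_min (by linarith [hX j]) (by linarith [hX (j + 1)])
    have h8 : max (t j) (t (j + 1)) ≤ L' + 1 / ((j : ℝ) + 1) :=
      max_le (by linarith [hX j]) (by linarith [hX (j + 1)])
    constructor <;> linarith [h1.1, h1.2]
  · intro ε hε
    refine (hfreq 0 (by norm_num) ε hε).mono ?_
    rintro n ⟨k, hk, h⟩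
    rw [show X k = L by simp [X, hk]] at h
    linarith [(abs_le.1 h).2]
  · intro ε hε
    refine (hfreq 1 (by norm_num) ε hε).mono ?_
    rintro n ⟨k, hk, h⟩
    rw [show X k = L' by simp [X, hk]] at h
    linarith [(abs_le.1 h).1]
end

section
/- For every real number L with 0 ≤ L ≤ 3^{−1/3} and every ε > 0, there exists a periodic infinite binary word w (i.e., there is a positive integer q with w_{i+q} = w_i for all i ≥ 1) such that the limit lim_{n→∞} (p_n(w)/n!)^{1/n} exists and satisfies |lim_{n→∞} (p_n(w)/n!)^{1/n} − L| < ε. -/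
open Filter

/-- `IsPeak π i` says that the (1-based) position `i` is a peak of the permutation `π` of
`{1,…,n}` (modeled as `Fin n`, zero-based): `2 ≤ i ≤ n-1` and `π(i-1) < π(i) > π(i+1)`. -/
def IsPeak {n : ℕ} (π : Equiv.Perm (Fin n)) (i : ℕ) : Prop :=
  ∃ (h2 : 2 ≤ i) (hn : i < n),
    π ⟨i - 2, by omega⟩ < π ⟨i - 1, by omega⟩ ∧ π ⟨i, hn⟩ < π ⟨i - 1, by omega⟩

/-- `pCount w n` is the number of permutations `π` of `{1,…,n}` such that for every
`1 ≤ i ≤ n-1`, `i` is a peak of `π` iff the `i`-th letter of the infinite binary word `w`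
(1-indexed, `w 0` is irrelevant) equals `1` (i.e. `true`). -/
noncomputable def pCount (w : ℕ → Bool) (n : ℕ) : ℕ :=
  Nat.card {π : Equiv.Perm (Fin n) //
    ∀ i : ℕ, 1 ≤ i → i + 1 ≤ n → (IsPeak π i ↔ w i = true)}

/-- `π` realizes the peak pattern prescribed by the word `w`. -/
def HasPeakPattern (w : ℕ → Bool) {n : ℕ} (π : Equiv.Perm (Fin n)) : Prop :=
  ∀ i : ℕ, 1 ≤ i → i + 1 ≤ n → (IsPeak π i ↔ w i = true)

theorem exists_perm_lt_iff {n : ℕ} {α : Type*} [LinearOrder α] (f : Fin n → α)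
    (hf : Function.Injective f) :
    ∃ σ : Equiv.Perm (Fin n), ∀ i j, σ i < σ j ↔ f i < f j := by
  have hmono : StrictMono (f ∘ Tuple.sort f) :=
    (Tuple.monotone_sort f).strictMono_of_injective (hf.comp (Tuple.sort f).injective)
  refine ⟨(Tuple.sort f).symm, fun i j => ?_⟩
  rw [← hmono.lt_iff_lt]
  simp

theorem card_mul_card_eq_sum {X G : Type*} [Fintype X] [Fintype G] (act : G → Equiv.Perm X)
    (E : X → Prop) :
    Nat.card {x // E x} * Fintype.card G = ∑ x, Nat.card {g // E (act g x)} := by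
  classical
  have key (g : G) : ∑ x, (if E (act g x) then 1 else 0) = Nat.card {x // E x} := by
    rw [Equiv.sum_comp (act g) (fun x => if E x then 1 else 0), Nat.card_eq_fintype_card,
      Fintype.card_subtype, Finset.card_filter]
  have key' (x : X) : Nat.card {g // E (act g x)} = ∑ g, (if E (act g x) then 1 else 0) := by
    rw [Nat.card_eq_fintype_card, Fintype.card_subtype, Finset.card_filter]
  simp_rw [key']
  rw [Finset.sum_comm]
  simp [key, mul_comm]

theorem card_strictMono_comp_mul_factorial_le {h n : ℕ} (f : Fin h ↪ Fin n) :
    Nat.card {π : Equiv.Perm (Fin n) // StrictMono (π ∘ f)} * h.factorial ≤ n.factorial := by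
  have H := card_mul_card_eq_sum
    (fun τ : Equiv.Perm (Fin h) => Equiv.mulRight (τ.viaFintypeEmbedding f))
    (fun π : Equiv.Perm (Fin n) => StrictMono (π ∘ f))
  rw [Fintype.card_perm, Fintype.card_fin] at H
  rw [H]
  calc _ ≤ ∑ _x : Equiv.Perm (Fin n), 1 := by
        refine Finset.sum_le_sum fun π _ => ?_
        rw [Finite.card_le_one_iff_subsingleton]
        refine ⟨fun ⟨τ, hτ⟩ ⟨ρ, hρ⟩ => ?_⟩
        have comp (τ : Equiv.Perm (Fin h)) :
            (Equiv.mulRight (τ.viaFintypeEmbedding f) π : Equiv.Perm (Fin n)) ∘ f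
              = (π ∘ f) ∘ τ := by
          ext i
          simp [Equiv.Perm.viaFintypeEmbedding_apply_image]
        simp only [comp] at hτ hρ
        have hr : Set.range ((π ∘ f) ∘ τ) = Set.range ((π ∘ f) ∘ ρ) := by
          rw [τ.surjective.range_comp, ρ.surjective.range_comp]
        have he := (hτ.range_inj hρ).1 hr
        ext i
        have := congrFun he i
        exact congrArg Fin.val (by simpa using this)
    _ = n.factorial := by simp [Fintype.card_perm]

theorem isPeak_iff_of_lt_iff {n m k : ℕ} (σ : Equiv.Perm (Fin n)) (π : Equiv.Perm (Fin m))
    (e : ∀ a, a < n → k + a < m)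
    (h : ∀ (a b : ℕ) (ha : a < n) (hb : b < n),
      σ ⟨a, ha⟩ < σ ⟨b, hb⟩ ↔ π ⟨k + a, e a ha⟩ < π ⟨k + b, e b hb⟩)
    {i : ℕ} (hi : 2 ≤ i) (hn : i < n) : IsPeak σ i ↔ IsPeak π (k + i) := by
  have e1 : k + i - 2 = k + (i - 2) := by omega
  have e2 : k + i - 1 = k + (i - 1) := by omega
  have hk := e i hn
  simp only [IsPeak, h, e1, e2, hi, hn, hk, exists_true_left, show 2 ≤ k + i by omega]

theorem hasPeakPattern_of_lt_iff {w : ℕ → Bool} {n m : ℕ} {σ : Equiv.Perm (Fin n)}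
    {π : Equiv.Perm (Fin m)} (hnm : n ≤ m)
    (h : ∀ (a b : ℕ) (ha : a < n) (hb : b < n),
      σ ⟨a, ha⟩ < σ ⟨b, hb⟩ ↔ π ⟨a, ha.trans_le hnm⟩ < π ⟨b, hb.trans_le hnm⟩)
    (hπ : HasPeakPattern w π) : HasPeakPattern w σ := by
  intro i h1 hi
  rw [← hπ i h1 (by omega)]
  rcases h1.eq_or_lt with rfl | h2
  · simp [IsPeak]
  · have := isPeak_iff_of_lt_iff (k := 0) σ π (fun a ha => by omega) (by simpa using h) h2
      (by omega)
    simpa using this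

theorem pCount_pos_of_le {w : ℕ → Bool} {n m : ℕ} (hnm : n ≤ m) (h : 0 < pCount w m) :
    0 < pCount w n := by
  obtain ⟨⟨π, hπ⟩⟩ := (Nat.card_pos_iff.1 h).1
  obtain ⟨σ, hσ⟩ := exists_perm_lt_iff (fun i : Fin n => π (Fin.castLE hnm i))
    (π.injective.comp (Fin.castLE_injective hnm))
  exact Nat.card_pos_iff.2
    ⟨⟨σ, hasPeakPattern_of_lt_iff hnm (fun a b ha hb => hσ ⟨a, ha⟩ ⟨b, hb⟩) hπ⟩, inferInstance⟩

/-- Between two windows that end and begin with a peak next to the border, the peak pattern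
decouples into the patterns of the two windows. -/
theorem hasPeakPattern_add_iff {w : ℕ → Bool} {n m : ℕ} (hn : 3 ≤ n) (hm : 3 ≤ m)
    (h₁ : w (n - 1) = true) (h₂ : w n = false) (h₃ : w (n + 1) = false)
    (h₄ : w (n + 2) = true) (π : Equiv.Perm (Fin (n + m)))
    (σ : Equiv.Perm (Fin n)) (ρ : Equiv.Perm (Fin m))
    (hσ : ∀ i j, σ i < σ j ↔ π (Fin.castAdd m i) < π (Fin.castAdd m j))
    (hρ : ∀ i j, ρ i < ρ j ↔ π (Fin.natAdd n i) < π (Fin.natAdd n j)) :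
    HasPeakPattern w π ↔ HasPeakPattern w σ ∧ HasPeakPattern (fun i => w (n + i)) ρ := by
  have left {i : ℕ} (hi : 2 ≤ i) (hin : i < n) : IsPeak σ i ↔ IsPeak π i := by
    have := isPeak_iff_of_lt_iff (k := 0) σ π (fun a ha => by omega)
      (by simpa using fun a b ha hb => hσ ⟨a, ha⟩ ⟨b, hb⟩) hi hin
    simpa using this
  have right {i : ℕ} (hi : 2 ≤ i) (him : i < m) : IsPeak ρ i ↔ IsPeak π (n + i) :=
    isPeak_iff_of_lt_iff (k := n) ρ π (fun a ha => by omega)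
      (fun a b ha hb => hρ ⟨a, ha⟩ ⟨b, hb⟩) hi him
  constructor
  · intro h
    refine ⟨hasPeakPattern_of_lt_iff (Nat.le_add_right n m)
      (fun a b ha hb => hσ ⟨a, ha⟩ ⟨b, hb⟩) h, fun i h1 hi => ?_⟩
    rcases h1.eq_or_lt with rfl | h2
    · simp [IsPeak, h₃]
    · rw [right h2 (by omega), h _ (by omega) (by omega)]
  · rintro ⟨hl, hr⟩ i h1 hi
    have pl : IsPeak π (n - 1) := (left (by omega) (by omega)).1
      ((hl (n - 1) (by omega) (by omega)).2 h₁)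
    have pr : IsPeak π (n + 2) := (right le_rfl (by omega)).1
      ((hr 2 (by omega) (by omega)).2 h₄)
    obtain ⟨_, _, -, pl⟩ := pl
    obtain ⟨_, _, pr, -⟩ := pr
    rcases lt_trichotomy i n with hin | rfl | hin
    · rcases h1.eq_or_lt with rfl | h2
      · rw [← hl 1 le_rfl (by omega)]; simp [IsPeak]
      · rw [← left h2 hin, hl i h1 (by omega)]
    · simp only [h₂, Bool.false_eq_true, iff_false]
      rintro ⟨_, _, q, -⟩
      exact lt_asymm pl q
    · obtain ⟨j, rfl⟩ := Nat.exists_eq_add_of_lt hin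
      rcases Nat.eq_zero_or_pos j with rfl | hj
      · simp only [add_zero, h₃, Bool.false_eq_true, iff_false]
        rintro ⟨_, _, -, q⟩
        exact lt_asymm pr q
      · have := right (i := j + 1) (by omega) (by omega)
        rw [add_assoc, ← this]
        exact hr (j + 1) (by omega) (by omega)

theorem pCount_add_mul {w : ℕ → Bool} {n m : ℕ} (hn : 3 ≤ n) (hm : 3 ≤ m)
    (h₁ : w (n - 1) = true) (h₂ : w n = false) (h₃ : w (n + 1) = false)
    (h₄ : w (n + 2) = true) :
    pCount w (n + m) * (n.factorial * m.factorial) =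
      (n + m).factorial * (pCount w n * pCount (fun i => w (n + i)) m) := by
  have H := card_mul_card_eq_sum
    (fun τ : Equiv.Perm (Fin n) × Equiv.Perm (Fin m) =>
      Equiv.mulRight (finSumFinEquiv.permCongr (Equiv.Perm.sumCongr τ.1 τ.2)))
    (fun π : Equiv.Perm (Fin (n + m)) => HasPeakPattern w π)
  rw [Fintype.card_prod, Fintype.card_perm, Fintype.card_perm, Fintype.card_fin,
    Fintype.card_fin] at H
  change Nat.card {π : Equiv.Perm (Fin (n + m)) // HasPeakPattern w π} * _ = _
  rw [H]
  trans ∑ _x : Equiv.Perm (Fin (n + m)), pCount w n * pCount (fun i => w (n + i)) m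
  · refine Finset.sum_congr rfl fun π _ => ?_
    obtain ⟨σ, hσ⟩ := exists_perm_lt_iff (fun i : Fin n => π (Fin.castAdd m i))
      (π.injective.comp (Fin.castAdd_injective n m))
    obtain ⟨ρ, hρ⟩ := exists_perm_lt_iff (fun i : Fin m => π (Fin.natAdd n i))
      (π.injective.comp (Fin.natAdd_injective m n))
    rw [pCount, pCount, ← Nat.card_prod]
    refine Nat.card_congr (((((Equiv.mulLeft σ).prodCongr (Equiv.mulLeft ρ)).subtypeEquiv
      (fun τ => ?_))).trans Equiv.subtypeProdEquivProd)
    refine hasPeakPattern_add_iff hn hm h₁ h₂ h₃ h₄ _ _ _ (fun i j => ?_) (fun i j => ?_)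
    · simp [hσ, Equiv.permCongr_apply]
    · simp [hρ, Equiv.permCongr_apply]
  · simp [Fintype.card_perm]

theorem pCount_three {w : ℕ → Bool} (h₁ : w 1 = false) (h₂ : w 2 = true) : pCount w 3 = 2 := by
  have : pCount w 3 = Nat.card {π : Equiv.Perm (Fin 3) // π 0 < π 1 ∧ π 2 < π 1} := by
    refine Nat.card_congr (Equiv.subtypeEquivRight fun π => ⟨fun h => ?_, fun h i h1 hi => ?_⟩)
    · obtain ⟨_, _, h⟩ := (h 2 (by omega) le_rfl).2 h₂
      exact h
    · obtain rfl | rfl : i = 1 ∨ i = 2 := by omega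
      · simp [IsPeak, h₁]
      · simpa [IsPeak, h₂] using h
  rw [this, Nat.card_eq_fintype_card]
  decide

/-- The word of period `m + 3 * a` made of one window of length `m` with peaks exactly next to
its two ends, followed by `a` windows of length `3` with a peak in the middle. -/
def windowWord (a m i : ℕ) : Bool :=
  decide (i % (m + 3 * a) = 2 ∨ i % (m + 3 * a) = m - 1 ∨
    (m < i % (m + 3 * a) ∧ (i % (m + 3 * a) - m) % 3 = 2))

/-- The number of permutations whose peaks are exactly the second and the penultimate position. -/
noncomputable def twoPeakCount (m : ℕ) : ℕ := pCount (windowWord 0 m) m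

theorem pCount_congr {w v : ℕ → Bool} {n : ℕ} (h : ∀ i, 1 ≤ i → i + 1 ≤ n → w i = v i) :
    pCount w n = pCount v n := by
  refine Nat.card_congr (Equiv.subtypeEquivRight fun π => forall_congr' fun i => ?_)
  refine forall_congr' fun h1 => forall_congr' fun hi => ?_
  rw [h i h1 hi]

theorem windowWord_zero_eq_true_iff {m i : ℕ} (hi : i < m) :
    windowWord 0 m i = true ↔ i = 2 ∨ i = m - 1 := by
  simp only [windowWord, mul_zero, add_zero, Nat.mod_eq_of_lt hi, decide_eq_true_eq]
  omega

theorem twoPeakCount_pos {m : ℕ} (hm : 5 ≤ m) : 0 < twoPeakCount m := by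
  set f : Fin m → ℕ := fun i =>
    if i.val = 0 then 1 else if i.val = 1 then 2 * m else
      if i.val = m - 1 then 0 else i.val + 2 with hf
  have hinj : Function.Injective f := by
    intro i j hij
    have := i.isLt
    have := j.isLt
    ext
    simp only [hf] at hij
    split_ifs at hij <;> omega
  obtain ⟨σ, hσ⟩ := exists_perm_lt_iff f hinj
  refine Nat.card_pos_iff.2 ⟨⟨σ, fun i h1 hi => ?_⟩, inferInstance⟩
  rw [windowWord_zero_eq_true_iff (by omega)]
  simp only [IsPeak, hσ, hf]
  constructor
  · rintro ⟨h2, hn, h, h'⟩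
    split_ifs at h h' <;> omega
  · intro h
    refine ⟨by omega, by omega, ?_, ?_⟩ <;> split_ifs <;> omega

theorem twoPeakCount_mul_factorial_le {h : ℕ} (hh : 2 ≤ h) :
    twoPeakCount (2 * h + 1) * h.factorial ≤ 2 * (2 * h + 1).factorial := by
  let desc : Fin h ↪ Fin (2 * h + 1) := ⟨fun i => ⟨h - i, by omega⟩, fun i j hij => by
    have := i.isLt
    have := j.isLt
    simp only [Fin.mk.injEq] at hij
    ext
    omega⟩
  let asc : Fin h ↪ Fin (2 * h + 1) := ⟨fun i => ⟨h + i, by omega⟩, fun i j hij => by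
    simp only [Fin.mk.injEq] at hij
    ext
    omega⟩
  have hd := card_strictMono_comp_mul_factorial_le desc
  have ha := card_strictMono_comp_mul_factorial_le asc
  suffices H : twoPeakCount (2 * h + 1) ≤
      Nat.card {π : Equiv.Perm (Fin (2 * h + 1)) // StrictMono (π ∘ desc)} +
      Nat.card {π : Equiv.Perm (Fin (2 * h + 1)) // StrictMono (π ∘ asc)} by nlinarith
  have hstep {k : ℕ} {g : Fin k → Fin (2 * h + 1)}
      (hg : ∀ i (hi : i + 1 < k), g ⟨i, by omega⟩ < g ⟨i + 1, hi⟩) : StrictMono g := by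
    cases k with
    | zero => exact fun i => i.elim0
    | succ k => exact Fin.strictMono_iff_lt_succ.2 fun i => hg i (by omega)
  classical
  rw [twoPeakCount, pCount]
  simp only [Nat.card_eq_fintype_card]
  refine le_trans (Fintype.card_subtype_mono _ _ fun π hπ => ?_) (Fintype.card_subtype_or _ _)
  obtain ⟨t, rfl⟩ := Nat.exists_eq_add_of_le' hh
  have prop {j k : ℕ} (hjk : j ≤ k) :
      ∀ hk : k + 2 ≤ 2 * t + 3, π ⟨j + 1, by omega⟩ < π ⟨j + 2, by omega⟩ →
        π ⟨k + 1, by omega⟩ < π ⟨k + 2, by omega⟩ := by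
    induction k, hjk using Nat.le_induction with
    | base => exact fun _ h => h
    | succ k _ ih =>
      intro hk hj
      have hlt := ih (by omega) hj
      by_contra hge
      have hne : π ⟨k + 2, by omega⟩ ≠ π ⟨k + 3, by omega⟩ := fun e => by
        simpa using π.injective e
      have hp : IsPeak π (k + 3) :=
        ⟨by omega, by omega, hlt, lt_of_le_of_ne (not_lt.1 hge) hne.symm⟩
      rw [hπ (k + 3) (by omega) (by omega), windowWord_zero_eq_true_iff (by omega)] at hp
      omega
  by_cases hc : π ⟨t + 1, by omega⟩ < π ⟨t + 2, by omega⟩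
  · right
    refine hstep fun i hi => ?_
    have := prop (j := t) (k := t + i + 1) (by omega) (by omega) hc
    change π ⟨t + 2 + i, _⟩ < π ⟨t + 2 + (i + 1), _⟩
    simpa only [show t + 2 + i = t + i + 1 + 1 by omega,
      show t + 2 + (i + 1) = t + i + 1 + 2 by omega] using this
  · left
    refine hstep fun i hi => ?_
    have hnot := mt (prop (j := t - i) (k := t) (by omega) (by omega)) hc
    have hne : π ⟨t - i + 2, by omega⟩ ≠ π ⟨t - i + 1, by omega⟩ := fun e => by
      simpa using π.injective e
    have := lt_of_le_of_ne (not_lt.1 hnot) hne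
    change π ⟨t + 2 - i, _⟩ < π ⟨t + 2 - (i + 1), _⟩
    simpa only [show t + 2 - i = t - i + 2 by omega,
      show t + 2 - (i + 1) = t - i + 1 by omega] using this

theorem pCount_windowWord_self {a m : ℕ} (hm : 5 ≤ m) :
    (pCount (windowWord a m) (m + 3 * a) : ℝ) / (m + 3 * a).factorial =
      twoPeakCount m / m.factorial * (1 / 3) ^ a := by
  have h_eval {i : ℕ} (hi : i < m + 3 * a) : windowWord a m i = true ↔
      (i = 2 ∨ i = m - 1 ∨ (m < i ∧ (i - m) % 3 = 2)) := by
    simp only [windowWord, Nat.mod_eq_of_lt hi, decide_eq_true_eq]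
  have h_end : windowWord a m (m + 3 * a) = false := by
    simp [windowWord]
    omega
  suffices H : ∀ j ≤ a, (pCount (windowWord a m) (m + 3 * j) : ℝ) / (m + 3 * j).factorial =
      twoPeakCount m / m.factorial * (1 / 3) ^ j from H a le_rfl
  intro j
  induction j with
  | zero =>
    intro _
    simp only [mul_zero, add_zero, pow_zero, mul_one, twoPeakCount]
    rw [pCount_congr fun i _ hi => ?_]
    rw [Bool.eq_iff_iff, h_eval (by omega), windowWord_zero_eq_true_iff (by omega)]
    omega
  | succ j ih =>
    intro hj
    have h₃ : windowWord a m (m + 3 * j + 1) = false := by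
      rw [← Bool.not_eq_true, h_eval (by omega)]
      omega
    have h₄ : windowWord a m (m + 3 * j + 2) = true := by
      rw [h_eval (by omega)]
      omega
    have := pCount_add_mul (w := windowWord a m) (n := m + 3 * j) (m := 3) (by omega) le_rfl
      (by rw [h_eval (by omega)]; omega)
      (by rw [← Bool.not_eq_true, h_eval (by omega)]; omega) h₃ h₄
    rw [pCount_three h₃ h₄] at this
    have cast := congrArg (Nat.cast (R := ℝ)) this
    push_cast [show Nat.factorial 3 = 6 from rfl] at cast
    rw [pow_succ, ← mul_assoc, ← ih (by omega), show m + 3 * (j + 1) = m + 3 * j + 3 by ring]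
    field_simp
    linarith

theorem pCount_windowWord_add {a m n : ℕ} (hm : 5 ≤ m) (hn : 3 ≤ n) :
    (pCount (windowWord a m) (n + (m + 3 * a)) : ℝ) / (n + (m + 3 * a)).factorial =
      twoPeakCount m / m.factorial * (1 / 3) ^ a *
        (pCount (windowWord a m) n / n.factorial) := by
  have h_eval {i : ℕ} (hi : i < m + 3 * a) : windowWord a m i = true ↔
      (i = 2 ∨ i = m - 1 ∨ (m < i ∧ (i - m) % 3 = 2)) := by
    simp only [windowWord, Nat.mod_eq_of_lt hi, decide_eq_true_eq]
  have h_shift (i : ℕ) : windowWord a m (m + 3 * a + i) = windowWord a m i := by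
    simp [windowWord]
  have := pCount_add_mul (w := windowWord a m) (n := m + 3 * a) (m := n) (by omega) hn
    (by rw [h_eval (by omega)]; omega)
    (by rw [← add_zero (m + 3 * a), h_shift, ← Bool.not_eq_true, h_eval (by omega)]; omega)
    (by rw [h_shift, ← Bool.not_eq_true, h_eval (by omega)]; omega)
    (by rw [h_shift, h_eval (by omega)]; omega)
  simp only [h_shift] at this
  have cast := congrArg (Nat.cast (R := ℝ)) this
  push_cast at cast
  rw [← pCount_windowWord_self hm, add_comm n]
  field_simp
  linarith

theorem pCount_windowWord_pos {a m : ℕ} (hm : 5 ≤ m) (n : ℕ) : 0 < pCount (windowWord a m) n := by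
  have hr := twoPeakCount_pos hm
  have key (k : ℕ) : 0 < pCount (windowWord a m) (m + 3 * a + k * (m + 3 * a)) := by
    have hpos : ∀ {n : ℕ}, 0 < (pCount (windowWord a m) n : ℝ) / n.factorial ↔
        0 < pCount (windowWord a m) n := fun {n} => by
      rw [div_pos_iff_of_pos_right (by positivity), Nat.cast_pos]
    induction k with
    | zero =>
      rw [zero_mul, add_zero, ← hpos, pCount_windowWord_self hm]
      positivity
    | succ k ih =>
      rw [add_mul, one_mul, ← add_assoc, ← hpos, pCount_windowWord_add hm (by omega)]
      have := hpos.2 ih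
      positivity
  refine pCount_pos_of_le ?_ (key n)
  nlinarith

/-- A positive sequence that is eventually multiplied by `r` over each period `q` has root growth
rate `r ^ (1 / q)`. -/
theorem tendsto_rpow_one_div_of_add_eq_mul {g : ℕ → ℝ} {r : ℝ} {q N : ℕ} (hr : 0 < r)
    (hq : 0 < q) (hg : ∀ n, 0 < g n) (h : ∀ n, N ≤ n → g (n + q) = r * g n) :
    Tendsto (fun n : ℕ => g n ^ (1 / (n : ℝ))) atTop (nhds (r ^ (1 / (q : ℝ)))) := by
  set P : ℝ := r ^ (1 / (q : ℝ)) with hP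
  have hPpos : 0 < P := Real.rpow_pos_of_pos hr _
  have hPq : P ^ q = r := by
    rw [hP, one_div, Real.rpow_inv_natCast_pow hr.le hq.ne']
  set d : ℕ → ℝ := fun n => g n / P ^ n with hd
  have hdpos (n : ℕ) : 0 < d n := div_pos (hg n) (pow_pos hPpos n)
  have hper (n : ℕ) (hn : N ≤ n) : d (n + q) = d n := by
    simp only [hd, h n hn, pow_add, hPq]
    field_simp
  have hred (n : ℕ) : N ≤ n → ∃ s ∈ Finset.range (N + q), d n = d s := by
    induction n using Nat.strong_induction_on with
    | _ n ih =>
      intro hn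
      by_cases hlt : n < N + q
      · exact ⟨n, Finset.mem_range.2 hlt, rfl⟩
      · obtain ⟨s, hs, hds⟩ := ih (n - q) (by omega) (by omega)
        refine ⟨s, hs, ?_⟩
        rw [← hds, ← hper (n - q) (by omega), Nat.sub_add_cancel (by omega)]
  have hne : (Finset.range (N + q)).Nonempty := Finset.nonempty_range_iff.2 (by omega)
  obtain ⟨s₀, -, hmin⟩ := Finset.exists_min_image (Finset.range (N + q)) d hne
  obtain ⟨s₁, -, hmax⟩ := Finset.exists_max_image (Finset.range (N + q)) d hne
  have hroot {c : ℝ} (hc : 0 < c) :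
      Tendsto (fun n : ℕ => c ^ (1 / (n : ℝ)) * P) atTop (nhds P) := by
    have := ((Real.continuousAt_const_rpow hc.ne').tendsto.comp
      tendsto_one_div_atTop_nhds_zero_nat).mul_const P
    simpa using this
  have hfac {c : ℝ} (hc : 0 < c) {n : ℕ} (hn : 1 ≤ n) :
      (c * P ^ n) ^ (1 / (n : ℝ)) = c ^ (1 / (n : ℝ)) * P := by
    rw [Real.mul_rpow hc.le (by positivity), one_div, Real.pow_rpow_inv_natCast hPpos.le (by omega)]
  have hgd (n : ℕ) : g n = d n * P ^ n := by
    simp only [hd]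
    field_simp
  refine tendsto_of_tendsto_of_tendsto_of_le_of_le' (hroot (hdpos s₀)) (hroot (hdpos s₁)) ?_ ?_
  all_goals
    filter_upwards [eventually_ge_atTop (N + 1)] with n hn
    obtain ⟨s, hs, hds⟩ := hred n (by omega)
    rw [hgd n, hfac (hdpos n) (by omega), hds]
    have := hmin s hs
    have := hmax s hs
    have := hdpos s
    have := hdpos s₀
    gcongr

theorem exists_twoPeakCount_le_exp (l : ℝ) (M : ℕ) :
    ∃ m, 5 ≤ m ∧ M ≤ m ∧ (twoPeakCount m : ℝ) / m.factorial ≤ Real.exp (-l * m) := by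
  have hlim := FloorSemiring.tendsto_pow_div_factorial_atTop (Real.exp (2 * l))
  have hev := hlim.eventually (gt_mem_nhds (show 0 < Real.exp (-l) / 2 by positivity))
  obtain ⟨h, hlt, hge⟩ := (hev.and (eventually_ge_atTop (M + 2))).exists
  refine ⟨2 * h + 1, by omega, by omega, ?_⟩
  have hcard : (twoPeakCount (2 * h + 1) : ℝ) * h.factorial ≤ 2 * (2 * h + 1).factorial :=
    mod_cast twoPeakCount_mul_factorial_le (h := h) (by omega)
  have hexp : Real.exp (-l * (2 * h + 1 : ℕ)) * Real.exp (2 * l) ^ h = Real.exp (-l) := by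
    rw [← Real.exp_nat_mul, ← Real.exp_add]
    congr 1
    push_cast
    ring
  rw [div_lt_iff₀ (by positivity)] at hlt
  rw [div_le_iff₀ (by positivity)]
  have hfac : (0 : ℝ) < h.factorial := by positivity
  have hle : 2 * Real.exp (2 * l) ^ h ≤ Real.exp (-l) * h.factorial := by linarith
  rw [← hexp] at hle
  have h2 : 2 ≤ Real.exp (-l * (2 * h + 1 : ℕ)) * h.factorial := by
    have : 0 < Real.exp (2 * l) ^ h := by positivity
    nlinarith
  have : (0 : ℝ) < (2 * h + 1).factorial := by positivity
  nlinarith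

/-- The growth rates of the words `windowWord a m` are dense in `(0, 3 ^ (-1 / 3))`. -/
theorem exists_windowWord_rate_close {L ε : ℝ} (hL0 : 0 < L) (hL1 : L < (3 : ℝ) ^ (-(1 : ℝ) / 3))
    (hε : 0 < ε) :
    ∃ a m : ℕ, 5 ≤ m ∧ |((twoPeakCount m : ℝ) / m.factorial * (1 / 3) ^ a) ^
      (1 / ((m + 3 * a : ℕ) : ℝ)) - L| < ε := by
  set l : ℝ := -Real.log L with hl
  have hexpl : Real.exp (-l) = L := by rw [hl, neg_neg, Real.exp_log hL0]
  set δ : ℝ := 3 * l - Real.log 3 with hδ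
  have hδpos : 0 < δ := by
    have := Real.log_lt_log hL0 hL1
    rw [Real.log_rpow (by norm_num)] at this
    linarith
  obtain ⟨η, hη, hcont⟩ :=
    Metric.continuousAt_iff.1 (Real.continuous_exp.continuousAt (x := -l)) ε hε
  obtain ⟨M, hM⟩ := exists_nat_gt (δ / η)
  obtain ⟨m, hm5, hmM, hr⟩ := exists_twoPeakCount_le_exp l M
  set r : ℝ := (twoPeakCount m : ℝ) / m.factorial with hr_def
  have hrpos : 0 < r := div_pos (Nat.cast_pos.2 (twoPeakCount_pos hm5)) (by positivity)
  have hlogr : Real.log r ≤ -l * m := by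
    rw [← Real.log_exp (-l * m)]
    exact Real.log_le_log hrpos hr
  set x : ℝ := (-Real.log r - l * m) / δ with hx
  have hx0 : 0 ≤ x := div_nonneg (by linarith) hδpos.le
  have hxδ : x * δ = -Real.log r - l * m := div_mul_cancel₀ _ hδpos.ne'
  have hfl := Nat.floor_le hx0
  have hfl' := Nat.lt_floor_add_one x
  refine ⟨⌊x⌋₊, m, hm5, ?_⟩
  set a := ⌊x⌋₊
  have hmpos : (0 : ℝ) < m := by
    exact_mod_cast (by omega : 0 < m)
  have hqpos : (0 : ℝ) < ((m + 3 * a : ℕ) : ℝ) := by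
    exact_mod_cast (by omega : 0 < m + 3 * a)
  have hmη : δ < η * m := by
    rw [div_lt_iff₀ hη] at hM
    have : (M : ℝ) ≤ m := mod_cast hmM
    nlinarith
  rw [Real.rpow_def_of_pos (by positivity), Real.log_mul hrpos.ne' (by positivity), Real.log_pow,
    one_div (3 : ℝ), Real.log_inv]
  rw [← hexpl, ← Real.dist_eq]
  refine hcont ?_
  rw [Real.dist_eq, show (Real.log r + a * -Real.log 3) * (1 / ((m + 3 * a : ℕ) : ℝ)) - -l =
    (a - x) * δ / ((m + 3 * a : ℕ) : ℝ) by
      rw [sub_mul, hxδ, hδ]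
      field_simp
      push_cast
      ring]
  rw [abs_lt, lt_div_iff₀ hqpos, div_lt_iff₀ hqpos]
  have hqm : η * m ≤ η * ((m + 3 * a : ℕ) : ℝ) := by
    gcongr
    omega
  constructor <;> nlinarith

theorem stmt2 (L : ℝ) (hL0 : 0 ≤ L) (hL1 : L ≤ (3 : ℝ) ^ (-(1 : ℝ) / 3)) (ε : ℝ)
    (hε : 0 < ε) :
    ∃ (w : ℕ → Bool) (q : ℕ), 0 < q ∧ (∀ i : ℕ, 1 ≤ i → w (i + q) = w i) ∧
      ∃ P : ℝ,
        Tendsto (fun n : ℕ => ((pCount w n : ℝ) / (Nat.factorial n : ℝ)) ^ (1 / (n : ℝ)))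
          atTop (nhds P) ∧ |P - L| < ε := by
  have hmem : L ∈ closure (Set.Ioo (0 : ℝ) ((3 : ℝ) ^ (-(1 : ℝ) / 3))) := by
    rw [closure_Ioo (by positivity)]
    exact ⟨hL0, hL1⟩
  obtain ⟨L', ⟨h0, h1⟩, hdist⟩ := Metric.mem_closure_iff.1 hmem (ε / 2) (half_pos hε)
  obtain ⟨a, m, hm, hclose⟩ := exists_windowWord_rate_close h0 h1 (half_pos hε)
  refine ⟨windowWord a m, m + 3 * a, by omega, fun i _ => by simp [windowWord],
    (twoPeakCount m / m.factorial * (1 / 3) ^ a) ^ (1 / ((m + 3 * a : ℕ) : ℝ)), ?_, ?_⟩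
  · exact tendsto_rpow_one_div_of_add_eq_mul
      (g := fun n => (pCount (windowWord a m) n : ℝ) / n.factorial) (N := 3)
      (mul_pos (div_pos (Nat.cast_pos.2 (twoPeakCount_pos hm)) (by positivity)) (by positivity))
      (by omega)
      (fun n => div_pos (Nat.cast_pos.2 (pCount_windowWord_pos hm n)) (by positivity))
      (fun n hn => pCount_windowWord_add hm hn)
  · rw [dist_comm, Real.dist_eq] at hdist
    have := abs_sub_le _ L' L |>.trans_lt (add_lt_add hclose hdist)
    rwa [add_halves] at this
end
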